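/- Let α be a partition with all parts at least 2 and overlapping partition p. Then the Schur support [R_α^p] is a proper subset of the Schur interval [α, (|α|−p_1, p_1)] if and only if ℓ(p) ≥ 2 and, for some 1 ≤ i ≤ ℓ(p)−1, the i-witness vector g̃^i fits its slack, i.e. Σ_{j=1}^i max(0, ϱ_i − α_j) ≤ p_{i+1} − 1. In that case α_j + g̃^i_j ≥ ϱ_i ≥ p_{i+1} − 1 − |g̃^i| for j = 1,…,i, and the weakly decreasing rearrangement of (α_1+g̃^i_1, …, α_i+g̃^i_i, ϱ_i, p_{i+1}−1−|g̃^i|) is a partition of |α| lying in [α, (|α|−p_1, p_1)] but not in [R_α^p]. -/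

import Mathlib

namespace RibbonSupport

/-- A partition: a weakly decreasing list of positive integers. -/
def IsPartition (a : List ℕ) : Prop := a.Pairwise (· ≥ ·) ∧ ∀ x ∈ a, 0 < x

/-- All parts of the list are at least `m`. -/
def PartsGE (a : List ℕ) (m : ℕ) : Prop := ∀ x ∈ a, m ≤ x

/-- Dominance order `lam ⪯ mu` on partitions of the same size. -/
def DomLE (lam mu : List ℕ) : Prop :=
  lam.sum = mu.sum ∧ ∀ i, (lam.take i).sum ≤ (mu.take i).sum

/-- The number of nonzero parts. -/
def lenp (p : List ℕ) : ℕ := p.countP (fun x => decide (x ≠ 0))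

/-- `p` is an overlapping partition for the monotone ribbon with row lengths `a`:
`p` has the same length as `a`, its last entry is `0`, and consecutive entries
decrease by `0` or `1`. -/
def IsOverlapSeq (a p : List ℕ) : Prop :=
  p.length = a.length ∧ p.getD (a.length - 1) 0 = 0 ∧
    ∀ i, i + 1 < a.length →
      p.getD i 0 = p.getD (i + 1) 0 ∨ p.getD i 0 = p.getD (i + 1) 0 + 1

/-- Rows `i` and `i+1` (0-based, top to bottom) of `R_a^p` overlap
(share exactly one column) exactly when `p_i = p_{i+1} + 1`. -/
def ovOf (p : List ℕ) : ℕ → Bool := fun i => decide (p.getD i 0 = p.getD (i + 1) 0 + 1)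

def rowOffset (a : List ℕ) (i : ℕ) : ℕ := (a.take i).sum

/-- `w` is the reading word (rows right-to-left, top to bottom) of a semistandard filling of
the ribbon with row lengths `a` (top to bottom) in which consecutive rows `i`, `i+1` share
exactly one column when `ov i = true` and no column otherwise.  Semistandardness amounts to:
within each row block the word is weakly decreasing (rows weakly increase left to right), and
at each overlapping gap the word strictly increases (columns strictly increase downwards). -/
def IsRibbonWord (a : List ℕ) (ov : ℕ → Bool) (w : List ℕ) : Prop :=
  w.length = a.sum ∧
  (∀ i j, i < a.length → j + 1 < a.getD i 0 →
    w.getD (rowOffset a i + j + 1) 0 ≤ w.getD (rowOffset a i + j) 0) ∧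
  (∀ i, i + 1 < a.length → ov i = true →
    w.getD (rowOffset a (i + 1) - 1) 0 < w.getD (rowOffset a (i + 1)) 0)

/-- Yamanouchi (lattice) word: each prefix has at least as many letters `j` as `j+1`. -/
def IsYam (w : List ℕ) : Prop := ∀ k j, (w.take k).count (j + 2) ≤ (w.take k).count (j + 1)

/-- The word `w` has content `nu` (and only positive letters). -/
def HasContent (w : List ℕ) (nu : List ℕ) : Prop :=
  (∀ j, w.count (j + 1) = nu.getD j 0) ∧ w.count 0 = 0

/-- There is an LR filling of the ribbon `(a, ov)` with content `nu`. -/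
def InSupportOv (a : List ℕ) (ov : ℕ → Bool) (nu : List ℕ) : Prop :=
  ∃ w : List ℕ, IsRibbonWord a ov w ∧ IsYam w ∧ HasContent w nu

/-- `nu` is in the Schur support of the monotone ribbon `R_a^p`. -/
def InSupport (a p nu : List ℕ) : Prop := InSupportOv a (ovOf p) nu

/-- `nu` is in the Schur support of the connected ribbon `R_a`. -/
def InSupportConn (a nu : List ℕ) : Prop := InSupportOv a (fun _ => true) nu

/-- `nu` belongs to the Schur interval `[a, (|a| - p₁, p₁)]` in dominance order. -/
def InInterval (a p nu : List ℕ) : Prop :=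
  DomLE a nu ∧ DomLE nu [a.sum - p.getD 0 0, p.getD 0 0]

/-- The Schur support of `R_a^p`, as a set of partitions. -/
def SupportSet (a p : List ℕ) : Set (List ℕ) := {nu | IsPartition nu ∧ InSupport a p nu}

/-- The Schur interval of `R_a^p`, as a set of partitions. -/
def IntervalSet (a p : List ℕ) : Set (List ℕ) := {nu | IsPartition nu ∧ InInterval a p nu}

/-- `R_a^p` has full Schur support. -/
def FullSupport (a p : List ℕ) : Prop := SupportSet a p = IntervalSet a p

/-- The Schur support of the connected ribbon `R_a`, as a set of partitions. -/
def SupportSetConn (a : List ℕ) : Set (List ℕ) := {nu | IsPartition nu ∧ InSupportConn a nu}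

/-- `ϱ_i` (1-based `i`): `Σ_{q=i+1}^{ℓ(a)} a_q − p_{i+1} + 1`. -/
def rho (a p : List ℕ) (i : ℕ) : ℕ := (a.drop i).sum + 1 - p.getD i 0

/-- Entry `j` (1-based) of the `i`-witness vector: `[ϱ_i − a_j]₊`. -/
def wit (a p : List ℕ) (i j : ℕ) : ℕ := rho a p i - a.getD (j - 1) 0

/-- Size of the `i`-witness vector. -/
def witSize (a p : List ℕ) (i : ℕ) : ℕ := ∑ j ∈ Finset.Icc 1 i, wit a p i j

/-! ### Tableaux -/

/-- Cells (0-based `(row, column)`) of the Young diagram of `lam`. -/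
def cells (lam : List ℕ) : Finset (ℕ × ℕ) :=
  (Finset.range lam.length ×ˢ Finset.range (lam.sum + 1)).filter
    (fun x => x.2 < lam.getD x.1 0)

/-- `T` is a semistandard Young tableau of shape `lam` and content `al`
(normalized to vanish off the diagram). -/
def IsTab (lam al : List ℕ) (T : ℕ × ℕ → ℕ) : Prop :=
  (∀ x, x ∉ cells lam → T x = 0) ∧
  (∀ x ∈ cells lam, 1 ≤ T x) ∧
  (∀ i c, (i, c + 1) ∈ cells lam → T (i, c) ≤ T (i, c + 1)) ∧
  (∀ i c, (i + 1, c) ∈ cells lam → T (i, c) < T (i + 1, c)) ∧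
  (∀ k, ((cells lam).filter (fun x => T x = k + 1)).card = al.getD k 0)

/-- Standardization of a tableau: entries are renumbered `1, …, N` in increasing order of
value, entries of equal value being numbered from southwest to northeast (by column). -/
def stdz (lam : List ℕ) (T : ℕ × ℕ → ℕ) : ℕ × ℕ → ℕ := fun x =>
  if x ∈ cells lam then
    ((cells lam).filter (fun y => T y < T x ∨ (T y = T x ∧ y.2 < x.2))).card + 1
  else 0

/-- `n` is a descent of the standard tableau `U`: the entry `n+1` lies in a strictly
lower row than the entry `n`. -/
def IsDescent (lam : List ℕ) (U : ℕ × ℕ → ℕ) (n : ℕ) : Prop :=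
  ∃ x ∈ cells lam, ∃ y ∈ cells lam, U x = n ∧ U y = n + 1 ∧ x.1 < y.1

/-- `S(al)`: the set of proper partial sums of the composition `al`. -/
def Sset (al : List ℕ) : Set ℕ := {n | ∃ k, 0 < k ∧ k < al.length ∧ n = (al.take k).sum}

/-- `s ∈ D(T)`: some entry `s+1` of `T` lies in a strictly lower row than some entry `s`. -/
def TabDescent (lam : List ℕ) (T : ℕ × ℕ → ℕ) (s : ℕ) : Prop :=
  ∃ x ∈ cells lam, ∃ y ∈ cells lam, T x = s ∧ T y = s + 1 ∧ x.1 < y.1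

/-- The word `w_{T̂}` of `T`: its `u`-th letter (1-based) is the 1-based row index of the
entry `u` of the standardization `T̂` of `T`. -/
def wordOf (lam : List ℕ) (T : ℕ × ℕ → ℕ) : List ℕ :=
  (List.range lam.sum).map fun n =>
    ∑ x ∈ (cells lam).filter (fun x => stdz lam T x = n + 1), (x.1 + 1)

/-- `j ∈ {2, …, ℓ(al)}` is a critical number of `T ∈ Tab(lam, al)`:
`w_{α_1+⋯+α_{j-1}} = w_{α_1+⋯+α_{j-1}+1}` in the word of `T`. -/
def CriticalNum (lam al : List ℕ) (T : ℕ × ℕ → ℕ) (j : ℕ) : Prop :=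
  2 ≤ j ∧ j ≤ al.length ∧
    (wordOf lam T).getD ((al.take (j - 1)).sum - 1) 0 =
      (wordOf lam T).getD ((al.take (j - 1)).sum) 0

/-- `j ∈ {2, …, ℓ(al)}` is a negligible critical number of `T`:
`w_{α_1+⋯+α_{j-1}} > w_{α_1+⋯+α_{j-1}+1}` in the word of `T`. -/
def NegligibleNum (lam al : List ℕ) (T : ℕ × ℕ → ℕ) (j : ℕ) : Prop :=
  2 ≤ j ∧ j ≤ al.length ∧
    (wordOf lam T).getD ((al.take (j - 1)).sum) 0 <
      (wordOf lam T).getD ((al.take (j - 1)).sum - 1) 0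

/-- The overlapping partition of the ribbon encoded by its gap pattern `b`
(`b j = true` iff rows `j` and `j+1`, 0-based, overlap). -/
def povOf (b : List Bool) : List ℕ :=
  (List.range (b.length + 1)).map fun i => (b.drop i).count true

/-! ### Connected ribbons with rows in arbitrary order -/

/-- Starting column (0-based) of row `i` of the connected ribbon with row lengths `b`. -/
def startConn (b : List ℕ) (i : ℕ) : ℕ := (b.drop (i + 1)).sum + (i + 1) - b.length

/-- Number of columns of the connected ribbon with row lengths `b`. -/
def ncols (b : List ℕ) : ℕ := b.sum + 1 - b.length

/-- Length of column `c` of the connected ribbon with row lengths `b`. -/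
def colLen (b : List ℕ) (c : ℕ) : ℕ :=
  ((Finset.range b.length).filter
    (fun i => startConn b i ≤ c ∧ c < startConn b i + b.getD i 0)).card

/-- Deletion rank of row `j`: the number of rows deleted strictly before row `j` when one
repeatedly deletes a longest remaining row in highest (most northern) position. -/
def delRank (g : List ℕ) (j : ℕ) : ℕ :=
  ((Finset.range g.length).filter
    (fun j' => g.getD j 0 < g.getD j' 0 ∨ (g.getD j' 0 = g.getD j 0 ∧ j' < j))).card

/-- The overlapping partition of the connected ribbon with row lengths `g`:
its `(d+1)`-st entry is the number of length-two columns of the ribbon remaining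
after deleting `d` rows as above, i.e. the number of adjacent pairs of surviving rows. -/
def ppiList (g : List ℕ) : List ℕ :=
  (List.range g.length).map fun d =>
    ((Finset.range (g.length - 1)).filter
      (fun j => d ≤ delRank g j ∧ d ≤ delRank g (j + 1))).card



/-! ### Words -/

theorem length_eq_sum_count (w : List ℕ) (M : ℕ) (h0 : w.count 0 = 0)
    (hM : ∀ j, M ≤ j → w.count (j + 1) = 0) :
    w.length = ∑ j ∈ Finset.range M, w.count (j + 1) := by
  induction w with
  | nil => simp
  | cons x w ih =>
    have hx : x ≠ 0 := by
      rintro rfl; simp at h0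
    obtain ⟨k, rfl⟩ := Nat.exists_eq_succ_of_ne_zero hx
    have hk : k < M := by
      by_contra hk
      have := hM k (by omega)
      simp at this
    have h0' : w.count 0 = 0 := by
      rw [List.count_cons] at h0; omega
    have hM' : ∀ j, M ≤ j → w.count (j + 1) = 0 := by
      intro j hj
      have := hM j hj
      rw [List.count_cons] at this; omega
    have h := ih h0' hM'
    simp only [List.count_cons, Finset.sum_add_distrib, List.length_cons]
    rw [← h]
    congr 1
    simp [hk]

/-- The weakly decreasing word with `g j` letters `j+1` for `j < M`. -/
def decw (g : ℕ → ℕ) : ℕ → List ℕ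
  | 0 => []
  | M + 1 => List.replicate (g M) (M + 1) ++ decw g M

theorem decw_mem (g : ℕ → ℕ) (M x : ℕ) (h : x ∈ decw g M) : 0 < x ∧ x ≤ M := by
  induction M with
  | zero => simp [decw] at h
  | succ M ih =>
    simp only [decw, List.mem_append, List.mem_replicate] at h
    rcases h with h | h
    · omega
    · have := ih h; omega

theorem decw_count (g : ℕ → ℕ) (M j : ℕ) :
    (decw g M).count (j + 1) = if j < M then g j else 0 := by
  induction M with
  | zero => simp [decw]
  | succ M ih =>
    simp only [decw, List.count_append, List.count_replicate, ih]
    by_cases h : M = j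
    · subst h; simp
    · have : ¬ (M + 1 == j + 1) = true := by simpa using h
      simp only [this]
      by_cases h1 : j < M
      · simp [h1, Nat.lt_succ_of_lt h1]
      · have : ¬ j < M + 1 := by omega
        simp [h1, this]

theorem decw_count_zero (g : ℕ → ℕ) (M : ℕ) : (decw g M).count 0 = 0 := by
  rw [List.count_eq_zero]
  intro h
  exact absurd (decw_mem g M 0 h).1 (by simp)

theorem decw_pairwise (g : ℕ → ℕ) (M : ℕ) : (decw g M).Pairwise (· ≥ ·) := by
  induction M with
  | zero => simp [decw]
  | succ M ih =>
    simp only [decw]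
    rw [List.pairwise_append]
    refine ⟨?_, ih, ?_⟩
    · rw [List.pairwise_replicate]; right; exact le_refl _
    · intro x hx y hy
      have := decw_mem g M y hy
      rw [List.mem_replicate] at hx
      omega

theorem decw_length (g : ℕ → ℕ) (M : ℕ) :
    (decw g M).length = ∑ j ∈ Finset.range M, g j := by
  induction M with
  | zero => simp [decw]
  | succ M ih => simp [decw, ih, Finset.sum_range_succ, add_comm]

theorem dec_unique {x y : List ℕ} (hx : x.Pairwise (· ≥ ·)) (hy : y.Pairwise (· ≥ ·))
    (h : ∀ k, x.count k = y.count k) : x = y := by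
  have hp : x.Perm y := List.perm_iff_count.2 h
  exact hp.eq_of_pairwise (fun a b _ _ h1 h2 => le_antisymm h2 h1) hx hy

theorem yam_prefix {u x : List ℕ} (h : IsYam (u ++ x)) : IsYam u := by
  intro k j
  have := h (min k u.length) j
  rw [List.take_append_of_le_length (by omega)] at this
  rw [show u.take k = u.take (min k u.length) by
    rw [← List.take_take]; simp]
  exact this

theorem yam_append {u x : List ℕ} (hu : IsYam u)
    (h : ∀ j, (u ++ x).count (j + 2) ≤ u.count (j + 1)) : IsYam (u ++ x) := by
  intro k j
  rw [List.take_append]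
  by_cases hk : k ≤ u.length
  · simpa [Nat.sub_eq_zero_of_le hk] using hu k j
  · rw [List.take_of_length_le (by omega)]
    have h1 := h j
    rw [List.count_append] at *
    have h2 : (x.take (k - u.length)).count (j + 2) ≤ x.count (j + 2) :=
      (List.take_sublist _ _).count_le _
    rw [List.count_append]
    omega

theorem yam_strip {u x z : List ℕ} (h : IsYam (u ++ x ++ z)) (hx : x.Pairwise (· ≥ ·)) (j : ℕ) :
    (u ++ x).count (j + 2) ≤ u.count (j + 1) := by
  have h' := yam_prefix h
  clear h
  induction x using List.reverseRecOn with
  | nil =>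
    have := h' u.length j
    simpa using this
  | append_singleton x y ih =>
    rw [List.pairwise_append] at hx
    obtain ⟨h1, -, h3⟩ := hx
    rw [← List.append_assoc] at h' ⊢
    have ih := ih h1 (yam_prefix h')
    rw [List.count_append]
    by_cases hy : y = j + 2
    · subst hy
      have h4 := h' (u ++ x ++ [j + 2]).length j
      rw [List.take_length] at h4
      have h5 : x.count (j + 1) = 0 := by
        rw [List.count_eq_zero]
        intro hm
        have := h3 _ hm (j + 2) (by simp)
        omega
      simp only [List.count_append, h5] at h4 ⊢
      simpa using h4
    · rw [List.count_singleton]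
      simp [hy]
      simpa using ih

theorem yam_swap_prefix {s s' z : List ℕ} (h : IsYam (s ++ z)) (hs' : IsYam s')
    (hp : s'.Perm s) : IsYam (s' ++ z) := by
  intro k j
  rw [List.take_append]
  by_cases hk : k ≤ s'.length
  · simpa [Nat.sub_eq_zero_of_le hk] using hs' k j
  · have := h k j
    rw [List.take_append, List.take_of_length_le (by have := hp.length_eq; omega)] at this
    rw [List.take_of_length_le (by omega)]
    rw [List.count_append, List.count_append] at *
    rw [hp.count_eq, hp.count_eq, hp.length_eq]
    exact this

/-! ### Blocks -/

def Blk (R : ℕ → ℕ → Prop) (c w : List ℕ) : Prop :=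
  ∃ ws : List (List ℕ), ws.map List.length = c ∧ ws.flatten = w ∧ ∀ x ∈ ws, x.IsChain R

theorem blk_nil {R : ℕ → ℕ → Prop} {w : List ℕ} : Blk R [] w ↔ w = [] := by
  constructor
  · rintro ⟨ws, h1, h2, -⟩
    simp at h1; subst h1; simpa using h2.symm
  · rintro rfl; exact ⟨[], by simp⟩

theorem blk_cons {R : ℕ → ℕ → Prop} {a : ℕ} {c w : List ℕ} :
    Blk R (a :: c) w ↔ ∃ x z, x.length = a ∧ w = x ++ z ∧ x.IsChain R ∧ Blk R c z := by
  constructor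
  · rintro ⟨ws, h1, h2, h3⟩
    cases ws with
    | nil => simp at h1
    | cons x ws =>
      simp at h1 h2 h3
      exact ⟨x, ws.flatten, h1.1, h2.symm, h3.1, ws, h1.2, rfl, h3.2⟩
  · rintro ⟨x, z, rfl, rfl, hx, ws, h1, h2, h3⟩
    exact ⟨x :: ws, by simp [h1], by simp [h2], by simpa using ⟨hx, h3⟩⟩

theorem blk_reverse {R : ℕ → ℕ → Prop} {c w : List ℕ} (h : Blk R c w) :
    Blk (fun a b => R b a) c.reverse w.reverse := by
  obtain ⟨ws, rfl, rfl, h⟩ := h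
  refine ⟨(ws.map List.reverse).reverse, ?_, ?_, ?_⟩
  · simp [List.map_reverse, Function.comp_def]
  · rw [List.reverse_flatten]
  · intro x hx
    simp at hx
    have h3 := h _ hx
    rw [List.isChain_reverse] at h3
    exact h3

theorem exists_blk (N : ℕ) : ∀ D : ℕ → Prop, ∃ c : List ℕ,
    (0 < N → ∃ c0 cs, c = (c0 + 1) :: cs) ∧
    ∀ (R : ℕ → ℕ → Prop) (w : List ℕ), w.length = N →
      (Blk R c w ↔ ∀ k, k + 1 < N → ¬ D (k + 1) → R (w.getD k 0) (w.getD (k + 1) 0)) := by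
  induction N with
  | zero =>
    intro D
    refine ⟨[], by simp, ?_⟩
    intro R w hw
    rw [blk_nil]
    simpa using hw
  | succ N ih =>
    intro D
    obtain ⟨c', h1, h2⟩ := ih (fun k => D (k + 1))
    rcases Nat.eq_zero_or_pos N with rfl | hN
    · refine ⟨[1], by simp, ?_⟩
      intro R w hw
      obtain ⟨x, rfl⟩ := List.length_eq_one_iff.1 hw
      simp only [show ∀ k, ¬ (k + 1 < 0 + 1) by omega, false_imp_iff, implies_true, iff_true]
      exact ⟨[[x]], by simp⟩
    · obtain ⟨c0, cs, rfl⟩ := h1 hN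
      by_cases hD : D 1
      · refine ⟨1 :: (c0 + 1) :: cs, fun _ => ⟨0, _, rfl⟩, ?_⟩
        intro R w hw
        obtain ⟨h, w, rfl⟩ := List.exists_cons_of_length_eq_add_one hw
        have hw' : w.length = N := by simpa using hw
        have e : Blk R (1 :: (c0 + 1) :: cs) (h :: w) ↔ Blk R ((c0 + 1) :: cs) w := by
          rw [blk_cons]
          constructor
          · rintro ⟨x, z, hx, hz, -, hb⟩
            obtain ⟨y, rfl⟩ := List.length_eq_one_iff.1 hx
            simp at hz
            rw [hz.2]; exact hb
          · intro hb
            exact ⟨[h], w, rfl, rfl, by simp, hb⟩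
        rw [e, h2 R w hw']
        constructor
        · intro H k hk hk'
          cases k with
          | zero => exact absurd hD hk'
          | succ k => simpa using H k (by omega) hk'
        · intro H k hk hk'
          simpa using H (k + 1) (by omega) hk'
      · refine ⟨(c0 + 1 + 1) :: cs, fun _ => ⟨_, _, rfl⟩, ?_⟩
        intro R w hw
        obtain ⟨h, w, rfl⟩ := List.exists_cons_of_length_eq_add_one hw
        have hw' : w.length = N := by simpa using hw
        obtain ⟨N, rfl⟩ : ∃ N', N = N' + 1 := ⟨N - 1, by omega⟩
        obtain ⟨g, w, rfl⟩ := List.exists_cons_of_length_eq_add_one hw'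
        have e : Blk R ((c0 + 1 + 1) :: cs) (h :: g :: w) ↔
            R h g ∧ Blk R ((c0 + 1) :: cs) (g :: w) := by
          rw [blk_cons, blk_cons]
          constructor
          · rintro ⟨x, z, hx, hz, hc, hb⟩
            obtain ⟨x1, x, rfl⟩ := List.exists_cons_of_length_eq_add_one hx
            have hx' : x.length = c0 + 1 := by simpa using hx
            obtain ⟨x2, x, rfl⟩ := List.exists_cons_of_length_eq_add_one hx'
            simp at hz
            obtain ⟨rfl, rfl, rfl⟩ := hz
            rw [List.isChain_cons_cons] at hc
            exact ⟨hc.1, _, z, hx', by simp, hc.2, hb⟩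
          · rintro ⟨hr, x, z, hx, hz, hc, hb⟩
            obtain ⟨x2, x, rfl⟩ := List.exists_cons_of_length_eq_add_one hx
            simp at hz
            obtain ⟨rfl, rfl⟩ := hz
            exact ⟨h :: g :: x, z, by simpa using hx, by simp, by
              rw [List.isChain_cons_cons]; exact ⟨hr, hc⟩, hb⟩
        rw [e, h2 R _ hw']
        constructor
        · rintro ⟨hr, H⟩ k hk hk'
          cases k with
          | zero => simpa using hr
          | succ k => simpa using H k (by omega) hk'
        · intro H
          refine ⟨by simpa using H 0 (by omega) hD, ?_⟩
          intro k hk hk'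
          simpa using H (k + 1) (by omega) hk'



/-! ### Bender-Knuth toggles -/

def hiT (lam mu : ℕ → ℕ) : ℕ → ℕ
  | 0 => mu 0
  | j + 1 => min (lam j) (mu (j + 1))

def tog (lam mu ka : ℕ → ℕ) (j : ℕ) : ℕ := max (lam j) (mu (j + 1)) + hiT lam mu j - ka j

theorem sum_lo_hi (lam mu : ℕ → ℕ) (M : ℕ) :
    ∑ j ∈ Finset.range M, (max (lam j) (mu (j + 1)) + hiT lam mu j) + hiT lam mu M
      = ∑ j ∈ Finset.range M, lam j + ∑ j ∈ Finset.range (M + 1), mu j := by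
  induction M with
  | zero => simp [hiT]
  | succ M ih =>
    rw [Finset.sum_range_succ, Finset.sum_range_succ (fun j => lam j),
      Finset.sum_range_succ _ (M + 1)]
    have e : hiT lam mu (M + 1) = min (lam M) (mu (M + 1)) := rfl
    omega

structure Inter (lam ka mu : ℕ → ℕ) : Prop where
  h1 : ∀ j, lam j ≤ ka j
  h2 : ∀ j, ka (j + 1) ≤ lam j
  h3 : ∀ j, ka j ≤ mu j
  h4 : ∀ j, mu (j + 1) ≤ ka j

theorem Inter.bounds {lam ka mu : ℕ → ℕ} (h : Inter lam ka mu) (j : ℕ) :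
    max (lam j) (mu (j + 1)) ≤ ka j ∧ ka j ≤ hiT lam mu j := by
  refine ⟨by have := h.h1 j; have := h.h4 j; omega, ?_⟩
  cases j with
  | zero => exact h.h3 0
  | succ j =>
    have := h.h2 j; have := h.h3 (j + 1)
    simp only [hiT]; omega

theorem Inter.tog_add {lam ka mu : ℕ → ℕ} (h : Inter lam ka mu) (j : ℕ) :
    tog lam mu ka j + ka j = max (lam j) (mu (j + 1)) + hiT lam mu j := by
  have := h.bounds j
  unfold tog; omega

theorem Inter.tog {lam ka mu : ℕ → ℕ} (h : Inter lam ka mu) :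
    Inter lam (tog lam mu ka) mu := by
  have hb := h.bounds
  have ha := h.tog_add
  refine ⟨?_, ?_, ?_, ?_⟩
  · intro j; have := hb j; have := ha j; omega
  · intro j; have := hb (j + 1); have := ha (j + 1); simp only [hiT] at *; omega
  · intro j
    have := hb j; have := ha j
    cases j with
    | zero => simp only [hiT] at *; omega
    | succ j => simp only [hiT] at *; omega
  · intro j; have := hb j; have := ha j; omega

theorem Inter.tog_sum {lam ka mu : ℕ → ℕ} (h : Inter lam ka mu) (M : ℕ) (hM : mu M = 0) :
    ∑ j ∈ Finset.range M, RibbonSupport.tog lam mu ka j + ∑ j ∈ Finset.range M, ka j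
      = ∑ j ∈ Finset.range M, lam j + ∑ j ∈ Finset.range M, mu j := by
  have h1 := sum_lo_hi lam mu M
  have h2 : hiT lam mu M = 0 := by
    cases M with
    | zero => simpa [hiT] using hM
    | succ M => simp [hiT, hM]
  rw [Finset.sum_range_succ, hM, h2] at h1
  rw [← Finset.sum_add_distrib, Finset.sum_congr rfl (fun j _ => h.tog_add j)]
  simpa using h1

/-! ### Symmetry of block counts -/

def YS (nu : ℕ → ℕ) (u c : List ℕ) : Set (List ℕ) :=
  {v | IsYam (u ++ v) ∧ (∀ j, (u ++ v).count (j + 1) = nu j) ∧ (u ++ v).count 0 = 0 ∧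
    Blk (· ≥ ·) c v}

theorem isChain_ge {x : List ℕ} : x.IsChain (· ≥ ·) ↔ x.Pairwise (· ≥ ·) :=
  List.isChain_iff_pairwise

/-- content function of a word -/
def ct (w : List ℕ) (j : ℕ) : ℕ := w.count (j + 1)

theorem ys_decomp {nu : ℕ → ℕ} {u c v : List ℕ} {a b : ℕ} (h : v ∈ YS nu u (a :: b :: c)) :
    ∃ x y z, v = x ++ (y ++ z) ∧ x.length = a ∧ y.length = b ∧ x.Pairwise (· ≥ ·) ∧
      y.Pairwise (· ≥ ·) ∧ Blk (· ≥ ·) c z ∧ Inter (ct u) (ct (u ++ x)) (ct (u ++ x ++ y)) := by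
  obtain ⟨h1, h2, h3, h4⟩ := h
  rw [blk_cons] at h4
  obtain ⟨x, z', hx, rfl, hxc, h4⟩ := h4
  rw [blk_cons] at h4
  obtain ⟨y, z, hy, rfl, hyc, h4⟩ := h4
  rw [isChain_ge] at hxc hyc
  refine ⟨x, y, z, rfl, hx, hy, hxc, hyc, h4, ?_⟩
  have s1 := fun j => yam_strip (u := u) (x := x) (z := y ++ z) (by simpa using h1) hxc j
  have s2 := fun j => yam_strip (u := u ++ x) (x := y) (z := z) (by simpa using h1) hyc j
  exact ⟨fun j => by simp [ct], s1, fun j => by simp [ct], s2⟩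

/-- The toggled word. -/
def bk (L : ℕ) (u : List ℕ) (a b : ℕ) (v : List ℕ) : List ℕ :=
  let x := v.take a
  let y := (v.drop a).take b
  let z := (v.drop a).drop b
  let k := tog (ct u) (ct (u ++ x ++ y)) (ct (u ++ x))
  decw (fun j => k j - ct u j) L ++ (decw (fun j => ct (u ++ x ++ y) j - k j) L ++ z)

theorem bk_eq (L : ℕ) (u x y z : List ℕ) :
    bk L u x.length y.length (x ++ (y ++ z)) =
      decw (fun j => tog (ct u) (ct (u ++ x ++ y)) (ct (u ++ x)) j - ct u j) L ++
      (decw (fun j => ct (u ++ x ++ y) j - tog (ct u) (ct (u ++ x ++ y)) (ct (u ++ x)) j) L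
        ++ z) := by
  simp only [bk, List.take_left, List.drop_left]

theorem bk_counts {L : ℕ} {u x y : List ℕ} (hI : Inter (ct u) (ct (u ++ x)) (ct (u ++ x ++ y)))
    (hL : ∀ j, L ≤ j → ct (u ++ x ++ y) j = 0) (h0 : (x ++ y).count 0 = 0) :
    let x' := decw (fun j => tog (ct u) (ct (u ++ x ++ y)) (ct (u ++ x)) j - ct u j) L
    let y' := decw (fun j => ct (u ++ x ++ y) j - tog (ct u) (ct (u ++ x ++ y)) (ct (u ++ x)) j) L
    (∀ j, ct (u ++ x') j = tog (ct u) (ct (u ++ x ++ y)) (ct (u ++ x)) j) ∧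
    (∀ j, ct (u ++ x' ++ y') j = ct (u ++ x ++ y) j) ∧
    x'.length = y.length ∧ y'.length = x.length := by
  intro x' y'
  have hT := hI.tog
  have e1 : ∀ j, ct (u ++ x') j = tog (ct u) (ct (u ++ x ++ y)) (ct (u ++ x)) j := by
    intro j
    have a1 := hT.h1 j
    have a3 := hT.h3 j
    have : ct (u ++ x') j = ct u j + x'.count (j + 1) := by simp [ct]
    rw [this, decw_count]
    split_ifs with hj
    · omega
    · have := hL j (by omega); omega
  have e2 : ∀ j, ct (u ++ x' ++ y') j = ct (u ++ x ++ y) j := by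
    intro j
    have a3 := hT.h3 j
    have : ct (u ++ x' ++ y') j = ct (u ++ x') j + y'.count (j + 1) := by simp [ct, add_assoc]
    rw [this, e1, decw_count]
    split_ifs with hj
    · omega
    · have := hL j (by omega); omega
  refine ⟨e1, e2, ?_, ?_⟩
  all_goals
    have hsum := hI.tog_sum L (hL L le_rfl)
    rw [List.count_append] at h0
    have lx := length_eq_sum_count x L (by omega) (by
      intro j hj; have := hL j hj; simp only [ct, List.count_append] at this; omega)
    have ly := length_eq_sum_count y L (by omega) (by
      intro j hj; have := hL j hj; simp only [ct, List.count_append] at this; omega)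
    have sx : ∑ j ∈ Finset.range L, ct (u ++ x) j = ∑ j ∈ Finset.range L, ct u j + x.length := by
      rw [lx, ← Finset.sum_add_distrib]; simp [ct]
    have sy : ∑ j ∈ Finset.range L, ct (u ++ x ++ y) j
        = ∑ j ∈ Finset.range L, ct (u ++ x) j + y.length := by
      rw [ly, ← Finset.sum_add_distrib]; simp [ct, add_assoc]
    have lx' : x'.length + ∑ j ∈ Finset.range L, ct u j
        = ∑ j ∈ Finset.range L, tog (ct u) (ct (u ++ x ++ y)) (ct (u ++ x)) j := by
      rw [decw_length, ← Finset.sum_add_distrib]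
      exact Finset.sum_congr rfl (fun j _ => Nat.sub_add_cancel (hT.h1 j))
    have ly' : y'.length + ∑ j ∈ Finset.range L, tog (ct u) (ct (u ++ x ++ y)) (ct (u ++ x)) j
        = ∑ j ∈ Finset.range L, ct (u ++ x ++ y) j := by
      rw [decw_length, ← Finset.sum_add_distrib]
      exact Finset.sum_congr rfl (fun j _ => Nat.sub_add_cancel (hT.h3 j))
    omega

theorem ct_ext {s t : List ℕ} (h : ∀ j, ct s j = ct t j) (h0 : s.count 0 = t.count 0) (k : ℕ) :
    s.count k = t.count k := by
  cases k with
  | zero => exact h0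
  | succ k => exact h k

theorem bk_mapsTo {L : ℕ} {nu : ℕ → ℕ} (hL : ∀ j, L ≤ j → nu j = 0) (u c : List ℕ) (a b : ℕ) :
    Set.MapsTo (bk L u a b) (YS nu u (a :: b :: c)) (YS nu u (b :: a :: c)) := by
  intro v hv
  obtain ⟨x, y, z, rfl, rfl, rfl, hx, hy, hz, hI⟩ := ys_decomp hv
  obtain ⟨h1, h2, h3, -⟩ := hv
  have hL' : ∀ j, L ≤ j → ct (u ++ x ++ y) j = 0 := by
    intro j hj
    have e := h2 j
    rw [hL j hj] at e
    simp only [ct, List.count_append] at e ⊢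
    omega
  have h0 : (x ++ y).count 0 = 0 := by
    simp only [List.count_append] at h3 ⊢; omega
  obtain ⟨e1, e2, e3, e4⟩ := bk_counts hI hL' h0
  rw [bk_eq]
  have dx := decw_pairwise (fun j => tog (ct u) (ct (u ++ x ++ y)) (ct (u ++ x)) j - ct u j) L
  have zx := decw_count_zero (fun j => tog (ct u) (ct (u ++ x ++ y)) (ct (u ++ x)) j - ct u j) L
  have dy := decw_pairwise
    (fun j => ct (u ++ x ++ y) j - tog (ct u) (ct (u ++ x ++ y)) (ct (u ++ x)) j) L
  have zy := decw_count_zero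
    (fun j => ct (u ++ x ++ y) j - tog (ct u) (ct (u ++ x ++ y)) (ct (u ++ x)) j) L
  have hT := hI.tog
  generalize decw (fun j => tog (ct u) (ct (u ++ x ++ y)) (ct (u ++ x)) j - ct u j) L = x' at *
  generalize decw
    (fun j => ct (u ++ x ++ y) j - tog (ct u) (ct (u ++ x ++ y)) (ct (u ++ x)) j) L = y' at *
  have hp : (u ++ x' ++ y').Perm (u ++ x ++ y) := by
    rw [List.perm_iff_count]
    apply ct_ext e2
    simp only [List.count_append] at h0 ⊢
    omega
  have hp' : (u ++ (x' ++ (y' ++ z))).Perm (u ++ (x ++ (y ++ z))) := by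
    have := hp.append_right z
    simpa using this
  refine ⟨?_, ?_, ?_, ?_⟩
  · have yu : IsYam u := yam_prefix h1
    have y1 : IsYam (u ++ x') := yam_append yu (fun j => by
      have := hT.h2 j; rw [← e1] at this; exact this)
    have y2 : IsYam (u ++ x' ++ y') := yam_append y1 (fun j => by
      have := hT.h4 j; rw [← e1, ← e2] at this; exact this)
    have := yam_swap_prefix (z := z) (by simpa using h1) y2 hp
    simpa using this
  · intro j; rw [hp'.count_eq]; exact h2 j
  · rw [hp'.count_eq]; exact h3
  · rw [blk_cons]
    refine ⟨x', _, e3, rfl, isChain_ge.2 dx, ?_⟩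
    rw [blk_cons]
    exact ⟨y', z, e4, rfl, isChain_ge.2 dy, hz⟩

theorem bk_injOn {L : ℕ} {nu : ℕ → ℕ} (hL : ∀ j, L ≤ j → nu j = 0) (u c : List ℕ) (a b : ℕ) :
    Set.InjOn (bk L u a b) (YS nu u (a :: b :: c)) := by
  intro v hv v2 hv2 heq
  obtain ⟨x, y, z, rfl, ha, hb, hx, hy, hz, hI⟩ := ys_decomp hv
  obtain ⟨x2, y2, z2, rfl, ha2, hb2, hx2, hy2, hz2, hI2⟩ := ys_decomp hv2
  obtain ⟨-, h2, h3, -⟩ := hv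
  obtain ⟨-, h22, h32, -⟩ := hv2
  have hL' : ∀ j, L ≤ j → ct (u ++ x ++ y) j = 0 := by
    intro j hj
    have e := h2 j
    rw [hL j hj] at e
    simp only [ct, List.count_append] at e ⊢
    omega
  have hL2' : ∀ j, L ≤ j → ct (u ++ x2 ++ y2) j = 0 := by
    intro j hj
    have e := h22 j
    rw [hL j hj] at e
    simp only [ct, List.count_append] at e ⊢
    omega
  have h0 : (x ++ y).count 0 = 0 := by
    simp only [List.count_append] at h3 ⊢; omega
  have h02 : (x2 ++ y2).count 0 = 0 := by
    simp only [List.count_append] at h32 ⊢; omega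
  obtain ⟨e1, e2, e3, e4⟩ := bk_counts hI hL' h0
  obtain ⟨f1, f2, f3, f4⟩ := bk_counts hI2 hL2' h02
  have q1 : bk L u a b (x ++ (y ++ z)) = bk L u x.length y.length (x ++ (y ++ z)) := by
    rw [ha, hb]
  have q2 : bk L u a b (x2 ++ (y2 ++ z2)) = bk L u x2.length y2.length (x2 ++ (y2 ++ z2)) := by
    rw [ha2, hb2]
  rw [q1, q2, bk_eq, bk_eq] at heq
  obtain ⟨g1, g2⟩ := List.append_inj heq (by rw [e3, f3, hb, hb2])
  obtain ⟨g3, rfl⟩ := List.append_inj g2 (by rw [e4, f4, ha, ha2])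
  have hmu : ∀ j, ct (u ++ x ++ y) j = ct (u ++ x2 ++ y2) j := by
    intro j
    rw [← e2 j, ← f2 j, g1, g3]
  have hmu' : ct (u ++ x ++ y) = ct (u ++ x2 ++ y2) := funext hmu
  have htog : ∀ j, tog (ct u) (ct (u ++ x ++ y)) (ct (u ++ x)) j
      = tog (ct u) (ct (u ++ x2 ++ y2)) (ct (u ++ x2)) j := by
    intro j
    rw [← e1 j, ← f1 j, g1]
  have hka : ∀ j, ct (u ++ x) j = ct (u ++ x2) j := by
    intro j
    have t1 := hI.tog_add j
    have t2 := hI2.tog_add j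
    rw [htog j, hmu'] at t1
    omega
  rw [List.count_append] at h0 h02
  have hxx : x = x2 := by
    apply dec_unique hx hx2
    apply ct_ext
    · intro j
      have := hka j
      simp only [ct, List.count_append] at this ⊢
      omega
    · omega
  subst hxx
  have hyy : y = y2 := by
    apply dec_unique hy hy2
    apply ct_ext
    · intro j
      have := hmu j
      simp only [ct, List.count_append] at this ⊢
      omega
    · omega
  rw [hyy]

theorem ys_inj {L : ℕ} {nu : ℕ → ℕ} (hL : ∀ j, L ≤ j → nu j = 0) {c c' : List ℕ}
    (h : c.Perm c') : ∀ u : List ℕ, ∃ f : List ℕ → List ℕ,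
      Set.MapsTo f (YS nu u c) (YS nu u c') ∧ Set.InjOn f (YS nu u c) := by
  induction h with
  | nil => exact fun u => ⟨id, fun _ h => h, fun _ _ _ _ h => h⟩
  | @cons a c c' _ ih =>
    intro u
    choose f hf1 hf2 using ih
    refine ⟨fun v => v.take a ++ f (u ++ v.take a) (v.drop a), ?_, ?_⟩
    · rintro v ⟨h1, h2, h3, h4⟩
      rw [blk_cons] at h4
      obtain ⟨x, z, rfl, rfl, hx, hz⟩ := h4
      simp only [List.take_left, List.drop_left]
      have := hf1 (u ++ x) (show z ∈ YS nu (u ++ x) c by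
        rw [YS, Set.mem_setOf_eq, List.append_assoc]; exact ⟨h1, h2, h3, hz⟩)
      obtain ⟨k1, k2, k3, k4⟩ := this
      refine ⟨by simpa using k1, by simpa using k2, by simpa using k3, ?_⟩
      rw [blk_cons]
      exact ⟨x, _, rfl, rfl, hx, k4⟩
    · rintro v ⟨h1, h2, h3, h4⟩ v' ⟨h1', h2', h3', h4'⟩ heq
      rw [blk_cons] at h4 h4'
      obtain ⟨x, z, hxl, rfl, hx, hz⟩ := h4
      obtain ⟨x', z', hxl', rfl, hx', hz'⟩ := h4'
      have t1 : (x ++ z).take a = x := by rw [← hxl]; simp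
      have t2 : (x ++ z).drop a = z := by rw [← hxl]; simp
      have t1' : (x' ++ z').take a = x' := by rw [← hxl']; simp
      have t2' : (x' ++ z').drop a = z' := by rw [← hxl']; simp
      simp only [t1, t2, t1', t2'] at heq
      obtain ⟨rfl, g⟩ := List.append_inj heq (by rw [hxl, hxl'])
      have := hf2 (u ++ x) (show z ∈ YS nu (u ++ x) c by
        rw [YS, Set.mem_setOf_eq, List.append_assoc]; exact ⟨h1, h2, h3, hz⟩)
        (show z' ∈ YS nu (u ++ x) c by
        rw [YS, Set.mem_setOf_eq, List.append_assoc]; exact ⟨h1', h2', h3', hz'⟩) g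
      rw [this]
  | swap a b c => exact fun u => ⟨bk L u b a, bk_mapsTo hL u c b a, bk_injOn hL u c b a⟩
  | trans _ _ ih1 ih2 =>
    intro u
    obtain ⟨f, f1, f2⟩ := ih1 u
    obtain ⟨g, g1, g2⟩ := ih2 u
    exact ⟨g ∘ f, g1.comp f1, g2.comp f2 f1⟩



/-! ### Inclusion-exclusion and evacuation -/

theorem fiber_card_eq {β : Type*} (X : Finset β) (A B : β → Finset ℕ)
    (h : ∀ D, (X.filter (fun w => A w ⊆ D)).card = (X.filter (fun w => B w ⊆ D)).card) :
    ∀ D, (X.filter (fun w => A w = D)).card = (X.filter (fun w => B w = D)).card := by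
  have key : ∀ (A : β → Finset ℕ) (D : Finset ℕ), (X.filter (fun w => A w ⊆ D)).card
      = (X.filter (fun w => A w = D)).card
        + ∑ E ∈ D.ssubsets, (X.filter (fun w => A w = E)).card := by
    classical
    intro A D
    rw [Finset.card_eq_sum_card_fiberwise (f := A) (t := D.powerset)]
    · rw [← Finset.insert_erase (Finset.mem_powerset_self D), Finset.sum_insert (by simp)]
      have e : D.powerset.erase D = D.ssubsets := rfl
      rw [e]
      congr 1
      · congr 1
        ext w
        simp only [Finset.mem_filter]
        constructor
        · rintro ⟨⟨a, b⟩, c⟩; exact ⟨a, c⟩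
        · rintro ⟨a, rfl⟩; exact ⟨⟨a, Finset.Subset.refl _⟩, rfl⟩
      · apply Finset.sum_congr rfl
        intro E hE
        rw [Finset.mem_ssubsets] at hE
        congr 1
        ext w
        simp only [Finset.mem_filter]
        constructor
        · rintro ⟨⟨a, b⟩, c⟩; exact ⟨a, c⟩
        · rintro ⟨a, rfl⟩; exact ⟨⟨a, hE.1⟩, rfl⟩
    · intro w hw
      simp at hw ⊢
      exact hw.2
  intro D
  induction D using Finset.strongInduction with
  | H D ih =>
    have h1 := h D
    rw [key A, key B] at h1
    have h2 : ∑ E ∈ D.ssubsets, (X.filter (fun w => A w = E)).card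
        = ∑ E ∈ D.ssubsets, (X.filter (fun w => B w = E)).card :=
      Finset.sum_congr rfl (fun E hE => ih E (Finset.mem_ssubsets.1 hE))
    omega

/-- positions `k` with `R w_{k-1} w_k` (0-based) -/
noncomputable def posSet (R : ℕ → ℕ → Prop) (w : List ℕ) : Finset ℕ :=
  open Classical in
  (Finset.range w.length).filter (fun k => 0 < k ∧ R (w.getD (k - 1) 0) (w.getD k 0))

theorem posSet_subset {R : ℕ → ℕ → Prop} {w : List ℕ} {D : Finset ℕ} :
    posSet R w ⊆ D ↔ ∀ k, k + 1 < w.length → ¬ (k + 1 ∈ D) →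
      ¬ R (w.getD k 0) (w.getD (k + 1) 0) := by
  classical
  constructor
  · intro h k hk hD hR
    exact hD (h (by simp [posSet] at *; exact ⟨hk, hR⟩))
  · intro h k hk
    simp only [posSet, Finset.mem_filter, Finset.mem_range] at hk
    obtain ⟨h1, h2, h3⟩ := hk
    obtain ⟨k, rfl⟩ : ∃ k', k = k' + 1 := ⟨k - 1, by omega⟩
    by_contra hD
    exact h k h1 hD (by simpa using h3)

theorem evac {L : ℕ} {nu : ℕ → ℕ} (hL : ∀ j, L ≤ j → nu j = 0) (u : List ℕ) (hu : IsYam u)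
    (hc : ∀ j, u.count (j + 1) = nu j) (h0 : u.count 0 = 0) :
    ∃ w : List ℕ, IsYam w ∧ (∀ j, w.count (j + 1) = nu j) ∧ w.count 0 = 0 ∧
      w.length = u.length ∧
      ∀ k, k + 1 < u.length → (w.getD k 0 < w.getD (k + 1) 0 ↔
        u.reverse.getD (k + 1) 0 < u.reverse.getD k 0) := by
  classical
  set XS : Set (List ℕ) := {w | IsYam w ∧ (∀ j, w.count (j + 1) = nu j) ∧ w.count 0 = 0} with hXS
  have hperm : ∀ w ∈ XS, w.Perm u := by
    rintro w ⟨-, w1, w2⟩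
    rw [List.perm_iff_count]
    apply ct_ext
    · intro j; simp only [ct]; rw [w1, hc]
    · rw [w2, h0]
  have hfin : XS.Finite := by
    apply (List.finite_toSet u.permutations).subset
    intro w hw
    exact List.mem_permutations.2 (hperm w hw)
  have hX : ∀ w, w ∈ hfin.toFinset ↔ w ∈ XS := fun w => hfin.mem_toFinset
  have hsub : ∀ D : Finset ℕ,
      (hfin.toFinset.filter (fun w => posSet (· < ·) w ⊆ D)).card =
      (hfin.toFinset.filter (fun w => posSet (· > ·) w.reverse ⊆ D)).card := by
    intro D
    obtain ⟨c, -, hcD⟩ := exists_blk u.length (fun k => k ∈ D)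
    have m1 : ∀ w, w ∈ hfin.toFinset.filter (fun w => posSet (· < ·) w ⊆ D) ↔
        w ∈ YS nu [] c := by
      intro w
      rw [Finset.mem_filter, hX]
      constructor
      · rintro ⟨hw, hs⟩
        have hl := (hperm w hw).length_eq
        refine ⟨hw.1, hw.2.1, hw.2.2, ?_⟩
        rw [hcD _ w hl]
        intro k hk hD
        have := posSet_subset.1 hs k (by omega) hD
        simp only [ge_iff_le]; omega
      · rintro ⟨a1, a2, a3, a4⟩
        have hw : w ∈ XS := ⟨a1, a2, a3⟩
        have hl := (hperm w hw).length_eq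
        refine ⟨hw, ?_⟩
        rw [hcD _ w hl] at a4
        rw [posSet_subset]
        intro k hk hD
        have := a4 k (by omega) hD
        simp only [ge_iff_le] at this; omega
    have m2 : ∀ w, w ∈ hfin.toFinset.filter (fun w => posSet (· > ·) w.reverse ⊆ D) ↔
        w ∈ YS nu [] c.reverse := by
      intro w
      rw [Finset.mem_filter, hX]
      constructor
      · rintro ⟨hw, hs⟩
        have hl := (hperm w hw).length_eq
        refine ⟨hw.1, hw.2.1, hw.2.2, ?_⟩
        have hb : Blk (· ≤ ·) c w.reverse := by
          rw [hcD _ _ (by simpa using hl)]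
          intro k hk hD
          have := posSet_subset.1 hs k (by simp; omega) hD
          omega
        have := blk_reverse hb
        rw [List.reverse_reverse] at this
        exact this
      · rintro ⟨a1, a2, a3, a4⟩
        have hw : w ∈ XS := ⟨a1, a2, a3⟩
        have hl := (hperm w hw).length_eq
        refine ⟨hw, ?_⟩
        have a5 := blk_reverse a4
        rw [List.reverse_reverse, hcD _ _ (by simpa using hl)] at a5
        rw [posSet_subset]
        intro k hk hD
        have := a5 k (by simp at hk; omega) hD
        simp only [ge_iff_le] at this; omega
    apply le_antisymm
    · obtain ⟨f, f1, f2⟩ := ys_inj hL (List.reverse_perm c).symm []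
      apply Finset.card_le_card_of_injOn f
      · intro w hw
        rw [Finset.mem_coe] at *
        exact (m2 _).2 (f1 ((m1 _).1 hw))
      · intro w hw w' hw' e
        rw [Finset.mem_coe] at *
        exact f2 ((m1 _).1 hw) ((m1 _).1 hw') e
    · obtain ⟨f, f1, f2⟩ := ys_inj hL (List.reverse_perm c) []
      apply Finset.card_le_card_of_injOn f
      · intro w hw
        rw [Finset.mem_coe] at *
        exact (m1 _).2 (f1 ((m2 _).1 hw))
      · intro w hw w' hw' e
        rw [Finset.mem_coe] at *
        exact f2 ((m2 _).1 hw) ((m2 _).1 hw') e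
  have hcard := fiber_card_eq hfin.toFinset (fun w => posSet (· < ·) w)
    (fun w => posSet (· > ·) w.reverse) hsub (posSet (· > ·) u.reverse)
  have hpos : 0 < (hfin.toFinset.filter
      (fun w => posSet (· > ·) w.reverse = posSet (· > ·) u.reverse)).card := by
    apply Finset.card_pos.2
    refine ⟨u, ?_⟩
    rw [Finset.mem_filter, hX]
    exact ⟨⟨hu, hc, h0⟩, rfl⟩
  rw [← hcard] at hpos
  obtain ⟨w, hw⟩ := Finset.card_pos.1 hpos
  rw [Finset.mem_filter, hX] at hw
  obtain ⟨hw, he⟩ := hw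
  have hl := (hperm w hw).length_eq
  refine ⟨w, hw.1, hw.2.1, hw.2.2, hl, ?_⟩
  intro k hk
  have := Finset.ext_iff.1 he (k + 1)
  simp only [posSet, Finset.mem_filter, Finset.mem_range, List.length_reverse, hl, hk,
    true_and, Nat.succ_pos, Nat.add_sub_cancel] at this
  exact this



/-- Partial sums of a sequence. -/
def SS (f : ℕ → ℕ) (m : ℕ) : ℕ := ∑ j ∈ Finset.range m, f j

theorem SS_zero (f : ℕ → ℕ) : SS f 0 = 0 := by simp [SS]

theorem SS_succ (f : ℕ → ℕ) (m : ℕ) : SS f (m + 1) = SS f m + f m := by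
  simp [SS, Finset.sum_range_succ]

theorem SS_mono (f : ℕ → ℕ) {m k : ℕ} (h : m ≤ k) : SS f m ≤ SS f k := by
  induction k, h using Nat.le_induction with
  | base => exact le_refl _
  | succ k _ ih => rw [SS_succ]; omega

theorem SS_const {f : ℕ → ℕ} {m k : ℕ} (h : m ≤ k) (h0 : ∀ j, m ≤ j → f j = 0) :
    SS f k = SS f m := by
  induction k, h using Nat.le_induction with
  | base => rfl
  | succ k hk ih => rw [SS_succ, ih, h0 k hk]; rfl

theorem SS_ge_mul {f : ℕ → ℕ} {m c : ℕ} (h : ∀ j, j < m → c ≤ f j) : m * c ≤ SS f m := by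
  induction m with
  | zero => simp
  | succ m ih =>
    rw [SS_succ, Nat.succ_mul]
    have := ih (fun j hj => h j (by omega))
    have := h m (by omega)
    omega

theorem SS_eq_mul {f : ℕ → ℕ} {m c : ℕ} (h : ∀ j, j < m → f j = c) : SS f m = m * c := by
  induction m with
  | zero => simp [SS_zero]
  | succ m ih =>
    rw [SS_succ, Nat.succ_mul, ih (fun j hj => h j (by omega)), h m (by omega)]

theorem SS_ge_mul_succ {f : ℕ → ℕ} {m c t : ℕ} (h : ∀ j, j < m → c ≤ f j) (ht : t < m)
    (hft : c + 1 ≤ f t) : m * c + 1 ≤ SS f m := by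
  induction m with
  | zero => omega
  | succ m ih =>
    rw [SS_succ, Nat.succ_mul]
    by_cases htm : t = m
    · have := SS_ge_mul (f := f) (m := m) (c := c) (fun j hj => h j (by omega))
      subst htm; omega
    · have := ih (fun j hj => h j (by omega)) (by omega)
      have := h m (by omega)
      omega

theorem anti_of_step {f : ℕ → ℕ} (h : ∀ i, f (i + 1) ≤ f i) {i j : ℕ} (hij : i ≤ j) :
    f j ≤ f i := by
  induction j, hij using Nat.le_induction with
  | base => exact le_refl _
  | succ k _ ih => exact (h k).trans ih

/-- Admissible data: row lengths `al` (with `L+1` rows), overlap partition `P`, content `nu`. -/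
structure Adm (L n : ℕ) (al P nu : ℕ → ℕ) : Prop where
  anti : ∀ i, al (i + 1) ≤ al i
  two : ∀ i, i < L + 1 → 2 ≤ al i
  zero : ∀ i, L + 1 ≤ i → al i = 0
  P0 : ∀ i, L ≤ i → P i = 0
  Pstep : ∀ i, P i = P (i + 1) ∨ P i = P (i + 1) + 1
  nuanti : ∀ i, nu (i + 1) ≤ nu i
  nuzero : ∀ i, L + 1 ≤ i → nu i = 0
  dom : ∀ m, SS al m ≤ SS nu m
  tot : SS nu (L + 1) = n
  totA : SS al (L + 1) = n
  key : ∀ i, nu i + P i + SS al i ≤ n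

namespace Adm

variable {L n : ℕ} {al P nu : ℕ → ℕ}

theorem P_le (h : Adm L n al P nu) (m : ℕ) : P m ≤ L - m := by
  by_cases hm : L ≤ m
  · rw [h.P0 m hm]; omega
  · induction hk : L - m generalizing m with
    | zero => omega
    | succ k ih =>
      have h1 := h.Pstep m
      by_cases hm' : L ≤ m + 1
      · have := h.P0 (m + 1) hm'; omega
      · have := ih (m + 1) hm' (by omega); omega

theorem tail (h : Adm L n al P nu) (m : ℕ) : SS al (m + 1) + 2 * (L - m) ≤ n := by
  by_cases hm : L ≤ m
  · have : SS al (m + 1) = n := by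
      rw [SS_const (m := L + 1) (by omega) h.zero, h.totA]
    omega
  · induction hk : L - m generalizing m with
    | zero => omega
    | succ k ih =>
      have h1 := h.two (m + 1) (by omega)
      have h2 := SS_succ al (m + 1)
      by_cases hm' : L ≤ m + 1
      · have : m + 1 = L := by omega
        rw [this] at h1 h2
        rw [this]
        have := h.totA
        omega
      · have := ih (m + 1) hm' (by omega)
        omega

theorem nu_total (h : Adm L n al P nu) (m : ℕ) (hm : L + 1 ≤ m) : SS nu m = n := by
  rw [SS_const (m := L + 1) hm h.nuzero, h.tot]

theorem nu_sum_le (h : Adm L n al P nu) (m : ℕ) : SS nu m ≤ n := by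
  by_cases hm : L + 1 ≤ m
  · rw [h.nu_total m hm]
  · rw [← h.tot]; exact SS_mono _ (by omega)

theorem al_sum_le (h : Adm L n al P nu) (m : ℕ) : SS al m ≤ n :=
  (h.dom m).trans (h.nu_sum_le m)

end Adm

def bb (n : ℕ) (al P : ℕ → ℕ) (j : ℕ) : ℕ := n - SS al (j + 1) - P (j + 1)

def CC (n : ℕ) (al P nu : ℕ → ℕ) (t j : ℕ) : ℕ :=
  min (nu j - if j = t then 1 else 0) (bb n al P j)

def Act (n : ℕ) (al P nu : ℕ → ℕ) (t j : ℕ) : Prop :=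
  bb n al P j < nu j - if j = t then 1 else 0

namespace Adm

variable {L n t : ℕ} {al P nu : ℕ → ℕ}

theorem bb_eq (h : Adm L n al P nu) (j : ℕ) :
    bb n al P j + P (j + 1) + SS al (j + 1) = n ∧ L - j ≤ bb n al P j := by
  have h1 := h.tail j
  have h2 := h.P_le (j + 1)
  unfold bb
  omega

theorem CC_bounds (h : Adm L n al P nu) (ht : nu (t + 1) < nu t) (j : ℕ) :
    nu (j + 1) ≤ CC n al P nu t j ∧ CC n al P nu t j ≤ nu j := by
  have h1 := h.bb_eq j
  have h2 := h.key (j + 1)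
  have h3 := h.nuanti j
  unfold CC
  split_ifs with hj
  · subst hj; omega
  · omega

theorem act_ge (h : Adm L n al P nu) (ht' : ∀ j, j < t → nu j = nu (j + 1)) {j : ℕ}
    (ha : Act n al P nu t j) : t ≤ j := by
  by_contra hc
  have h1 := h.bb_eq j
  have h2 := h.key (j + 1)
  have h3 := ht' j (by omega)
  unfold Act at ha
  omega

theorem act_CC {j : ℕ} (ha : Act n al P nu t j) : CC n al P nu t j = bb n al P j := by
  unfold Act at ha; unfold CC; omega

theorem nact_CC {j : ℕ} (ha : ¬ Act n al P nu t j) :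
    CC n al P nu t j = nu j - if j = t then 1 else 0 := by
  unfold Act at ha; unfold CC; omega

theorem Q1 (h : Adm L n al P nu) (ht : nu (t + 1) < nu t) (m : ℕ)
    (hn : ∀ j, j < m → ¬ Act n al P nu t j) :
    SS al (m + 1) ≤ SS (CC n al P nu t) m + al 0 := by
  have e : ∀ m, (∀ j, j < m → ¬ Act n al P nu t j) →
      SS (CC n al P nu t) m + (if t < m then 1 else 0) = SS nu m := by
    intro m
    induction m with
    | zero => intro _; simp [SS_zero]
    | succ m ih =>
      intro hn
      have h1 := ih (fun j hj => hn j (by omega))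
      have h2 := nact_CC (hn m (by omega))
      rw [SS_succ, SS_succ, h2]
      by_cases hm : m = t
      · subst hm
        simp at h1 ⊢
        omega
      · have : (t < m + 1) ↔ (t < m) := by omega
        simp only [this, if_neg hm]
        omega
  have e1 := e m hn
  have d := h.dom m
  have d1 := h.dom (m + 1)
  have a0 := anti_of_step h.anti (Nat.zero_le m)
  rw [SS_succ] at d1 ⊢
  rw [SS_succ] at d1
  by_contra hc
  have htm : t < m := by
    by_contra hx
    rw [if_neg hx] at e1; omega
  rw [if_pos htm] at e1
  have q1 : SS nu m = SS al m := by omega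
  have q2 : al m = al 0 := by omega
  have q3 : SS al m = m * al 0 := SS_eq_mul (fun j hj => by
    have := anti_of_step h.anti (Nat.zero_le j)
    have := anti_of_step h.anti hj.le
    omega)
  have q4 : m * al 0 + 1 ≤ SS nu m := SS_ge_mul_succ (t := t) (fun j hj => by
    have := anti_of_step h.nuanti hj.le
    omega) htm (by
    have := anti_of_step h.nuanti (show t + 1 ≤ m by omega)
    omega)
  omega

theorem Q2 (h : Adm L n al P nu) (ht : nu (t + 1) < nu t)
    (ht' : ∀ j, j < t → nu j = nu (j + 1)) (m : ℕ) :
    (∃ i, i < m ∧ Act n al P nu t i) → (∀ j, j < m → 1 ≤ nu j) →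
    n ≤ SS (CC n al P nu t) m + al 0 + (L - m) := by
  induction m with
  | zero => rintro ⟨i, hi, _⟩; omega
  | succ m ih =>
    rintro ⟨i, hi, hai⟩ hpos
    rw [SS_succ]
    by_cases ham : Act n al P nu t m
    · rw [act_CC ham]
      have hb := h.bb_eq m
      have hP := h.P_le (m + 1)
      have : SS al (m + 1) ≤ SS (CC n al P nu t) m + al 0 := by
        by_cases hex : ∃ i, i < m ∧ Act n al P nu t i
        · have := ih hex (fun j hj => hpos j (by omega))
          have := h.tail m
          omega
        · push Not at hex
          exact h.Q1 ht m hex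
      omega
    · have him : i < m := by
        rcases Nat.lt_succ_iff_lt_or_eq.1 hi with h1 | h1
        · exact h1
        · subst h1; exact absurd hai ham
      have hti := h.act_ge ht' hai
      have := ih ⟨i, him, hai⟩ (fun j hj => hpos j (by omega))
      have c := nact_CC ham
      rw [if_neg (by omega)] at c
      have := hpos m (by omega)
      omega

theorem Q12 (h : Adm L n al P nu) (ht : nu (t + 1) < nu t)
    (ht' : ∀ j, j < t → nu j = nu (j + 1)) (m : ℕ) (hpos : ∀ j, j < m → 1 ≤ nu j) :
    SS al (m + 1) ≤ SS (CC n al P nu t) m + al 0 := by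
  by_cases hex : ∃ i, i < m ∧ Act n al P nu t i
  · have := h.Q2 ht ht' m hex hpos
    have := h.tail m
    omega
  · push Not at hex
    exact h.Q1 ht m hex

theorem Q3 (h : Adm L n al P nu) (ht : nu (t + 1) < nu t)
    (ht' : ∀ j, j < t → nu j = nu (j + 1)) :
    n ≤ SS (CC n al P nu t) (L + 1) + al 0 := by
  classical
  by_cases hex : ∃ i, i < L + 1 ∧ Act n al P nu t i
  swap
  · push Not at hex
    have := h.Q1 ht (L + 1) hex
    rw [SS_succ, h.totA] at this
    omega
  by_cases htwo : ∃ i j, i < j ∧ j < L + 1 ∧ Act n al P nu t i ∧ Act n al P nu t j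
  · obtain ⟨i, j, hij, hj, hai, haj⟩ := htwo
    have hpj : 1 ≤ nu j := by unfold Act at haj; omega
    have := h.Q2 ht ht' j ⟨i, hij, hai⟩ (fun k hk => by
      have := anti_of_step h.nuanti hk.le; omega)
    have hb := h.bb_eq j
    have := SS_mono (CC n al P nu t) (show j + 1 ≤ L + 1 by omega)
    rw [SS_succ, act_CC haj] at this
    omega
  obtain ⟨i, hi, hai⟩ := hex
  have huniq : ∀ j, j < L + 1 → j ≠ i → ¬ Act n al P nu t j := by
    intro j hj hji haj
    rcases lt_or_gt_of_ne hji with h1 | h1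
    · exact htwo ⟨j, i, h1, hi, haj, hai⟩
    · exact htwo ⟨i, j, h1, hj, hai, haj⟩
  have hti := h.act_ge ht' hai
  have hbi := h.bb_eq i
  have hkey := h.key i
  have hPi := h.Pstep i
  have hPl := h.P_le i
  have hai0 := anti_of_step h.anti (Nat.zero_le i)
  have hss := SS_succ al i
  have htl := h.tail i
  have sumeq : SS (CC n al P nu t) (L + 1) + (nu i - bb n al P i) +
      (if t = i then 0 else 1) = n := by
    refine Eq.trans ?_ h.tot
    have hbl : bb n al P i ≤ nu i := by unfold Act at hai; omega
    have e : ∀ j ∈ Finset.range (L + 1), nu j = CC n al P nu t j +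
        (if j = i then nu i - bb n al P i else 0) +
        (if j = t then (if t = i then 0 else 1) else 0) := by
      intro j hj
      rw [Finset.mem_range] at hj
      by_cases hji : j = i
      · subst hji
        rw [act_CC hai, if_pos rfl]
        split_ifs with h1 h2 <;> omega
      · rw [nact_CC (huniq j hj hji), if_neg hji]
        by_cases hjt : j = t
        · subst hjt
          rw [if_pos rfl, if_neg hji, if_pos rfl]
          omega
        · simp [hjt]
    unfold SS
    rw [Finset.sum_congr rfl e, Finset.sum_add_distrib, Finset.sum_add_distrib,
      Finset.sum_ite_eq', Finset.sum_ite_eq', if_pos (Finset.mem_range.2 hi),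
      if_pos (Finset.mem_range.2 (show t < L + 1 by omega))]
  by_cases hteq : t = i
  · rw [if_pos hteq] at sumeq
    omega
  rw [if_neg hteq] at sumeq
  by_contra hc
  have two0 := h.two 0 (by omega)
  have e1 : al i = al 0 := by omega
  have e2 : nu i + P i + SS al i = n := by omega
  have q3 : SS al i = i * al 0 := SS_eq_mul (fun j hj => by
    have := anti_of_step h.anti (Nat.zero_le j)
    have := anti_of_step h.anti hj.le
    omega)
  have q4 : i * nu i + 1 ≤ SS nu i := SS_ge_mul_succ (t := t)
    (fun j hj => anti_of_step h.nuanti hj.le) (by omega) (by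
    have := anti_of_step h.nuanti (show t + 1 ≤ i by omega)
    omega)
  have q5 := h.nu_sum_le (i + 1)
  rw [SS_succ] at q5
  have q6 : al 0 + (L - i) ≤ nu i := by omega
  have q7 : i * (al 0 + (L - i)) ≤ i * nu i := Nat.mul_le_mul_left _ q6
  have q8 : 1 * (L - i) ≤ i * (L - i) := Nat.mul_le_mul_right _ (by omega)
  rw [Nat.mul_add] at q7
  omega

theorem QQ (h : Adm L n al P nu) (ht : nu (t + 1) < nu t)
    (ht' : ∀ j, j < t → nu j = nu (j + 1)) (m : ℕ) :
    SS al (m + 1) ≤ SS (CC n al P nu t) m + al 0 := by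
  by_cases hpos : ∀ j, j < m → 1 ≤ nu j
  · exact h.Q12 ht ht' m hpos
  · push Not at hpos
    obtain ⟨j, hj, hj0⟩ := hpos
    have q3 := h.Q3 ht ht'
    have hle := h.al_sum_le (m + 1)
    have : SS (CC n al P nu t) (L + 1) ≤ SS (CC n al P nu t) m := by
      by_cases hm : L + 1 ≤ m
      · exact SS_mono _ hm
      · rw [SS_const (m := m) (k := L + 1) (by omega)]
        intro k hk
        have h1 := (h.CC_bounds ht k).2
        have h2 := anti_of_step h.nuanti (show j ≤ k by omega)
        omega
    omega

theorem step (h : Adm L n al P nu) (ht : nu (t + 1) < nu t)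
    (ht' : ∀ j, j < t → nu j = nu (j + 1)) :
    ∃ nu' : ℕ → ℕ, (∀ i, nu (i + 1) ≤ nu' i ∧ nu' i ≤ nu i) ∧ nu' t < nu t ∧
      (∀ m, SS al (m + 1) ≤ SS nu' m + al 0) ∧ SS nu' L + al 0 = n ∧
      (∀ i, nu' i + P (i + 1) + SS al (i + 1) ≤ n) ∧
      (P 0 = P 1 + 1 → ∀ t', (∀ j, j < t' → nu' j = nu' (j + 1)) → nu' (t' + 1) < nu' t' →
        ∃ r, t' < r ∧ nu' r < nu r) := by
  set C := CC n al P nu t with hC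
  set F : ℕ → ℕ := fun m => min (SS C m) (SS nu (m + 1) - al 0) with hF
  have hd1 := h.dom 1
  have hal1 : SS al 1 = al 0 := by rw [SS_succ, SS_zero]; omega
  have hnu1 : SS nu 1 = nu 0 := by rw [SS_succ, SS_zero]; omega
  have hge : ∀ m, al 0 ≤ SS nu (m + 1) := fun m => by
    have := SS_mono nu (show 1 ≤ m + 1 by omega)
    omega
  have hCb := h.CC_bounds ht
  have hinc : ∀ m, F m + nu (m + 1) ≤ F (m + 1) ∧ F (m + 1) ≤ F m + C m := by
    intro m
    have h1 := SS_succ C m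
    have h2 := SS_succ nu (m + 1)
    have h3 := hge m
    have h4 := hCb m
    simp only [hF]
    rw [← hC] at h4
    omega
  set nu' : ℕ → ℕ := fun m => F (m + 1) - F m with hnu'
  have hnup : ∀ m, F m + nu' m = F (m + 1) := fun m => by
    have := hinc m
    simp only [hnu']; omega
  have hF0 : F 0 = 0 := by simp [hF, SS_zero]
  have hS : ∀ m, SS nu' m = F m := by
    intro m
    induction m with
    | zero => rw [SS_zero, hF0]
    | succ m ih => rw [SS_succ, ih, hnup]
  have hQ := h.QQ ht ht'
  have hb : ∀ i, nu (i + 1) ≤ nu' i ∧ nu' i ≤ C i := fun i => by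
    have h1 := hinc i
    have h2 := hnup i
    omega
  have hb' : ∀ i, nu (i + 1) ≤ nu' i ∧ nu' i ≤ nu i := fun i => by
    have h1 := hb i
    have h2 := hCb i
    rw [← hC] at h2
    omega
  have hdom : ∀ m, SS al (m + 1) ≤ SS nu' m + al 0 := by
    intro m
    have h1 := hQ m
    have h2 := h.dom (m + 1)
    have h3 := hge m
    rw [hS]; simp only [hF]; rw [← hC] at h1; omega
  have htt : nu' t < nu t := by
    have h1 := (hb t).2
    have h2 : C t ≤ nu t - 1 := by simp [hC, CC]
    omega
  have htot : SS nu' L + al 0 = n := by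
    have h1 := hdom L
    rw [h.totA] at h1
    have h2 : F L ≤ SS nu (L + 1) - al 0 := by simp [hF]
    have h3 := hge L
    rw [h.tot] at h2 h3
    rw [hS] at h1 ⊢
    omega
  refine ⟨nu', hb', htt, hdom, htot, ?_, ?_⟩
  · intro i
    have h1 := (hb i).2
    have h2 := h.bb_eq i
    have h3 : C i ≤ bb n al P i := by simp [hC, CC]
    omega
  · intro hP t' hc hd
    rcases Nat.eq_zero_or_pos t with h0 | h0
    · by_contra hno
      push Not at hno
      have hc0 : ∀ j, j ≤ t' → nu' j = nu' 0 := by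
        intro j
        induction j with
        | zero => intro _; rfl
        | succ j ih => intro hj; rw [← hc j (by omega)]; exact ih (by omega)
      have heq : ∀ r, nu' (r + 1) = nu (r + 1) := by
        intro r
        have h1 := hb' (r + 1)
        by_cases hr : t' < r + 1
        · have := hno (r + 1) hr; omega
        · have h2 := hc0 (r + 1) (by omega)
          have h3 := (hb' 0).1
          have h4 := anti_of_step h.nuanti (show 0 + 1 ≤ r + 1 by omega)
          omega
      have hsum : ∀ m, SS nu (m + 1) + nu' 0 = SS nu' (m + 1) + nu 0 := by
        intro m
        induction m with
        | zero => rw [SS_succ, SS_succ, SS_zero, SS_zero]; omega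
        | succ m ih => rw [SS_succ, SS_succ nu', heq]; omega
      have s1 := hsum L
      rw [h.tot, SS_succ] at s1
      have z1 : nu' L = 0 := by
        have h1 := hnup L
        have h2 : F (L + 1) ≤ SS nu (L + 1 + 1) - al 0 := by simp [hF]
        rw [h.nu_total (L + 1 + 1) (by omega)] at h2
        rw [hS] at htot
        omega
      have s2 : nu' 0 + al 0 = nu 0 := by omega
      have e1 : nu' 0 = min (C 0) (nu 0 + nu 1 - al 0) := by
        have := hnup 0
        rw [hF0] at this
        simp only [hF, SS_succ, SS_zero] at this
        simpa using this
      have e2 : C 0 = min (nu 0 - 1) (bb n al P 0) := by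
        simp [hC, CC, h0]
      have e3 := h.bb_eq 0
      rw [hal1] at e3
      have e4 := h.key 0
      rw [SS_zero] at e4
      have e5 := h.two 0 (by omega)
      by_cases hn1 : nu 1 = 0
      · have : SS nu (L + 1) = SS nu 1 := SS_const (by omega) (fun j hj => by
          have := anti_of_step h.nuanti hj; omega)
        rw [h.tot, hnu1] at this
        omega
      · simp only [zero_add] at e3
        omega
    · refine ⟨t, ?_, htt⟩
      by_contra hlt
      have h1 := hc (t - 1) (by omega)
      rw [show t - 1 + 1 = t by omega] at h1
      have h2 := (hb' (t - 1)).1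
      rw [show t - 1 + 1 = t by omega] at h2
      omega

end Adm



theorem SS_shift (f : ℕ → ℕ) (m : ℕ) : SS (fun i => f (i + 1)) m + f 0 = SS f (m + 1) := by
  induction m with
  | zero => simp [SS]
  | succ m ih => rw [SS_succ, SS_succ f (m + 1), ← ih]; omega

theorem getD_zero_le {r : List ℕ} {k : ℕ}
    (h : ∀ j, j + 1 < k → r.getD j 0 ≤ r.getD (j + 1) 0) (j : ℕ) (hj : j < k) :
    r.getD 0 0 ≤ r.getD j 0 := by
  induction j with
  | zero => exact le_refl _
  | succ j ih => exact (ih (by omega)).trans (h j hj)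

theorem mem_take_getD {r : List ℕ} {k x : ℕ} (h : x ∈ r.take k) :
    ∃ j, j < k ∧ r.getD j 0 = x := by
  obtain ⟨j, hj, he⟩ := List.getElem_of_mem h
  simp only [List.length_take] at hj
  refine ⟨j, by omega, ?_⟩
  rw [List.getD_eq_getElem _ _ (by omega)]
  rw [← he, List.getElem_take]

theorem first_descent {nu : ℕ → ℕ} {M : ℕ} (hanti : ∀ i, nu (i + 1) ≤ nu i) (h0 : 0 < nu 0)
    (hM : nu M = 0) : ∃ t, nu (t + 1) < nu t ∧ ∀ j, j < t → nu j = nu (j + 1) := by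
  classical
  have hex : ∃ t, nu (t + 1) < nu t := by
    by_contra hno
    push Not at hno
    have : ∀ k, nu 0 ≤ nu k := by
      intro k
      induction k with
      | zero => exact le_refl _
      | succ k ih => exact ih.trans (hno k)
    have := this M
    omega
  refine ⟨Nat.find hex, Nat.find_spec hex, fun j hj => ?_⟩
  have := Nat.find_min hex hj
  have := hanti j
  omega

/-- The reversed word has the required row and overlap pattern. -/
def RowPat (K : ℕ) (al P : ℕ → ℕ) (r : List ℕ) : Prop :=
  (∀ i j, i < K → j + 1 < al i → r.getD (SS al i + j) 0 ≤ r.getD (SS al i + j + 1) 0) ∧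
  (∀ i, i + 1 < K → P i = P (i + 1) + 1 →
    r.getD (SS al (i + 1)) 0 < r.getD (SS al (i + 1) - 1) 0)

theorem build (L : ℕ) : ∀ (n : ℕ) (al P nu : ℕ → ℕ), Adm L n al P nu → ∀ t,
    nu (t + 1) < nu t → (∀ j, j < t → nu j = nu (j + 1)) →
    ∃ r : List ℕ, IsYam r.reverse ∧ (∀ j, r.count (j + 1) = nu j) ∧ r.count 0 = 0 ∧
      r.length = n ∧ RowPat (L + 1) al P r ∧ t + 1 ∈ r.take (al 0) := by
  induction L with
  | zero =>
    intro n al P nu h t ht ht'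
    have hz : ∀ j, nu (j + 1) = 0 := fun j => h.nuzero _ (by omega)
    have ht0 : t = 0 := by
      by_contra hc
      have := h.nuzero t (by omega)
      omega
    have h1 := h.tot
    have h2 := h.totA
    rw [SS_succ, SS_zero] at h1 h2
    have h3 := h.two 0 (by omega)
    refine ⟨List.replicate n 1, ?_, ?_, ?_, ?_, ⟨?_, ?_⟩, ?_⟩
    · intro k j
      simp [List.count_replicate]
    · intro j
      rw [List.count_replicate]
      rcases j with _ | j
      · simp; omega
      · simp [hz]
    · simp [List.count_replicate]
    · simp
    · intro i j hi hj
      have : i = 0 := by omega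
      subst this
      rw [SS_zero, List.getD_eq_getElem _ _ (by simp; omega),
        List.getD_eq_getElem _ _ (by simp; omega)]
      simp
    · intro i hi; omega
    · rw [ht0, List.take_replicate, List.mem_replicate]
      simp; omega
  | succ L ih =>
    intro n al P nu h t ht ht'
    obtain ⟨nu', hb, htt, hdom, htot, hkey, hdes⟩ := h.step ht ht'
    have htwo := h.two 0 (by omega)
    have hA : Adm L (n - al 0) (fun i => al (i + 1)) (fun i => P (i + 1)) nu' := by
      refine ⟨fun i => h.anti _, fun i hi => h.two _ (by omega), fun i hi => h.zero _ (by omega),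
        fun i hi => h.P0 _ (by omega), fun i => h.Pstep _, fun i => (hb (i + 1)).2.trans (hb i).1,
        ?_, ?_, ?_, ?_, ?_⟩
      · intro i hi
        have h1 := hkey i
        have h2 : SS al (i + 1) = n := by
          rw [SS_const (m := L + 1 + 1) (by omega) h.zero, h.totA]
        omega
      · intro m
        have h1 := hdom m
        have h2 := SS_shift al m
        omega
      · omega
      · have h2 := SS_shift al (L + 1)
        rw [h.totA] at h2
        omega
      · intro i
        have h1 := hkey i
        have h2 := SS_shift al i
        omega
    have hnu'0 : 0 < nu' 0 := by
      have h1 := hA.dom 1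
      have h2 := hA.two 0 (by omega)
      rw [SS_succ, SS_succ, SS_zero, SS_zero] at h1
      omega
    obtain ⟨t', htd, htc⟩ := first_descent (M := L + 1) hA.nuanti hnu'0 (hA.nuzero _ le_rfl)
    obtain ⟨r', hy, hcnt, hc0, hlen, ⟨hrow, hov⟩, hmem⟩ := ih _ _ _ _ hA t' htd htc
    set g : ℕ → ℕ := fun j => nu j - nu' j with hg
    set x := decw g (L + 2) with hx
    have hxlen : x.length = al 0 := by
      rw [hx, decw_length]
      have h1 : SS g (L + 2) + SS nu' (L + 2) = SS nu (L + 2) := by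
        unfold SS
        rw [← Finset.sum_add_distrib]
        refine Finset.sum_congr rfl fun j _ => ?_
        have := (hb j).2
        simp only [hg]; omega
      have h2 : SS nu (L + 2) = n := h.tot
      have h3 : SS nu' (L + 2) = SS nu' (L + 1) := SS_const (by omega) hA.nuzero
      have h4 : ∑ j ∈ Finset.range (L + 2), g j = SS g (L + 2) := rfl
      rw [h4]
      omega
    have hxc : ∀ j, x.count (j + 1) = nu j - nu' j := by
      intro j
      rw [hx, decw_count]
      split_ifs with hj
      · rfl
      · have := h.nuzero j (by omega)
        omega
    have hxp : x.reverse.Pairwise (· ≤ ·) := by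
      rw [List.pairwise_reverse]
      exact decw_pairwise g (L + 2)
    have hxl : x.reverse.length = al 0 := by simpa using hxlen
    have hleft : ∀ k, k < al 0 → (x.reverse ++ r').getD k 0 = x.reverse.getD k 0 := fun k hk =>
      List.getD_append _ _ _ _ (by omega)
    have hright : ∀ k, (x.reverse ++ r').getD (al 0 + k) 0 = r'.getD k 0 := fun k => by
      rw [List.getD_append_right _ _ _ _ (by omega), hxl]
      congr 1; omega
    have htx : ∀ k, nu' k < nu k → k + 1 ∈ x.reverse := by
      intro k hk
      rw [List.mem_reverse, ← List.count_pos_iff, hxc]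
      omega
    refine ⟨x.reverse ++ r', ?_, ?_, ?_, ?_, ⟨?_, ?_⟩, ?_⟩
    · rw [List.reverse_append, List.reverse_reverse]
      refine yam_append hy fun j => ?_
      rw [List.count_append, List.count_reverse, List.count_reverse, hcnt, hcnt, hxc]
      have h1 := (hb j).1
      have h2 := (hb (j + 1)).2
      omega
    · intro j
      rw [List.count_append, List.count_reverse, hcnt, hxc]
      have := (hb j).2
      omega
    · rw [List.count_append, List.count_reverse, hc0, hx, decw_count_zero]
    · rw [List.length_append, hxl, hlen]
      omega
    · intro i j hi hj
      rcases i with _ | i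
      · rw [SS_zero, Nat.zero_add, hleft _ (by omega), hleft _ hj,
          List.getD_eq_getElem _ _ (by omega), List.getD_eq_getElem _ _ (by omega)]
        exact List.pairwise_iff_getElem.1 hxp _ _ _ _ (by omega)
      · have h1 := SS_shift al i
        rw [show SS al (i + 1) + j = al 0 + (SS (fun i => al (i + 1)) i + j) by omega,
          show al 0 + (SS (fun i => al (i + 1)) i + j) + 1 =
            al 0 + (SS (fun i => al (i + 1)) i + j + 1) by omega, hright, hright]
        exact hrow i j (by omega) hj
    · intro i hi hP
      rcases i with _ | i
      · have h1 : SS al (0 + 1) = al 0 := by rw [SS_succ, SS_zero]; omega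
        obtain ⟨q, hq, hqn⟩ := hdes hP t' htc htd
        have h2 := hright 0
        rw [Nat.add_zero] at h2
        rw [h1, h2, hleft _ (by omega)]
        obtain ⟨j, hj, hje⟩ := mem_take_getD hmem
        have h3 := getD_zero_le (r := r') (k := al 1) (fun j hj => by
          have := hrow 0 j (by omega) hj
          rw [SS_zero, Nat.zero_add] at this
          exact this) j hj
        have h4 := htx q hqn
        obtain ⟨k, hk, hke⟩ := List.getElem_of_mem h4
        have h5 : x.reverse.getD k 0 ≤ x.reverse.getD (al 0 - 1) 0 := by
          rw [List.getD_eq_getElem _ _ hk, List.getD_eq_getElem _ _ (by omega)]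
          by_cases hkk : k = al 0 - 1
          · subst hkk; exact le_refl _
          · exact List.pairwise_iff_getElem.1 hxp _ _ _ _ (by omega)
        rw [List.getD_eq_getElem _ _ hk, hke] at h5
        omega
      · have h1 := SS_shift al (i + 1)
        have h2 := SS_mono (fun i => al (i + 1)) (show 1 ≤ i + 1 by omega)
        have h3 := hA.two 0 (by omega)
        rw [SS_succ, SS_zero] at h2
        have h4 := hov i (by omega) hP
        rw [← h1, show SS (fun i => al (i + 1)) (i + 1) + al 0 - 1 =
          al 0 + (SS (fun i => al (i + 1)) (i + 1) - 1) by omega, Nat.add_comm _ (al 0),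
          hright, hright]
        exact h4
    · rw [List.take_append_of_le_length (by omega), ← hxl, List.take_length]
      exact htx t htt



theorem take_sum_eq (a : List ℕ) (m : ℕ) : (a.take m).sum = SS (fun i => a.getD i 0) m := by
  induction m with
  | zero => simp [SS]
  | succ m ih =>
    rw [SS_succ, ← ih]
    by_cases h : m < a.length
    · rw [List.sum_take_succ _ _ h, List.getD_eq_getElem _ _ h]
    · rw [List.getD_eq_default _ _ (by omega), List.take_of_length_le (by omega),
        List.take_of_length_le (by omega)]
      rfl

theorem SS_ge_length (a : List ℕ) {m : ℕ} (h : a.length ≤ m) :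
    SS (fun i => a.getD i 0) m = a.sum := by
  rw [← take_sum_eq, List.take_of_length_le h]

theorem getD_anti {a : List ℕ} (h : a.Pairwise (· ≥ ·)) (i : ℕ) :
    a.getD (i + 1) 0 ≤ a.getD i 0 := by
  by_cases hi : i + 1 < a.length
  · rw [List.getD_eq_getElem _ _ hi, List.getD_eq_getElem _ _ (by omega)]
    exact List.pairwise_iff_getElem.1 h _ _ _ _ (by omega)
  · rw [List.getD_eq_default _ _ (by omega)]; omega

theorem partsGE_getD {a : List ℕ} {c : ℕ} (h : PartsGE a c) {i : ℕ} (hi : i < a.length) :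
    c ≤ a.getD i 0 := by
  rw [List.getD_eq_getElem _ _ hi]
  exact h _ (List.getElem_mem hi)

theorem ov_zero {a p : List ℕ} (hp : IsOverlapSeq a p) {i : ℕ} (hi : a.length - 1 ≤ i) :
    p.getD i 0 = 0 := by
  by_cases h : i < a.length
  · have : i = a.length - 1 := by omega
    rw [this]; exact hp.2.1
  · exact List.getD_eq_default _ _ (by have := hp.1; omega)

theorem ov_step {a p : List ℕ} (hp : IsOverlapSeq a p) (i : ℕ) :
    p.getD i 0 = p.getD (i + 1) 0 ∨ p.getD i 0 = p.getD (i + 1) 0 + 1 := by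
  by_cases h : i + 1 < a.length
  · exact hp.2.2 i h
  · left
    rw [ov_zero hp (show a.length - 1 ≤ i by omega),
      ov_zero hp (show a.length - 1 ≤ i + 1 by omega)]

theorem adm_of {a p nu : List ℕ} (ha : IsPartition a) (h2 : PartsGE a 2) (hp : IsOverlapSeq a p)
    (hnu : nu.Pairwise (· ≥ ·)) (hd : DomLE a nu) (hne : a ≠ [])
    (hk : ∀ i, nu.getD i 0 + p.getD i 0 + SS (fun i => a.getD i 0) i ≤ a.sum) :
    Adm (a.length - 1) a.sum (fun i => a.getD i 0) (fun i => p.getD i 0)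
      (fun i => nu.getD i 0) := by
  have hl : 0 < a.length := List.length_pos_iff.2 hne
  have hl1 : a.length - 1 + 1 = a.length := by omega
  have hdom : ∀ m, SS (fun i => a.getD i 0) m ≤ SS (fun i => nu.getD i 0) m := fun m => by
    rw [← take_sum_eq, ← take_sum_eq]; exact hd.2 m
  refine ⟨getD_anti ha.1, fun i hi => partsGE_getD h2 (by omega), fun i hi =>
    List.getD_eq_default _ _ (by omega), fun i hi => ov_zero hp hi, ov_step hp, getD_anti hnu,
    ?_, hdom, ?_, ?_, hk⟩
  · intro i hi
    have h1 := hk i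
    rw [SS_ge_length a (by omega)] at h1
    omega
  · have h1 := hdom (a.length - 1 + 1)
    rw [SS_ge_length a (by omega)] at h1
    have h3 := SS_mono (fun i => nu.getD i 0) (le_max_left (a.length - 1 + 1) nu.length)
    rw [SS_ge_length nu (le_max_right _ _), ← hd.1] at h3
    omega
  · exact SS_ge_length a (by omega)

theorem suff {a p nu : List ℕ} (ha : IsPartition a) (h2 : PartsGE a 2) (hp : IsOverlapSeq a p)
    (hnu : IsPartition nu) (hd : DomLE a nu)
    (hk : ∀ i, nu.getD i 0 + p.getD i 0 + SS (fun i => a.getD i 0) i ≤ a.sum) :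
    InSupport a p nu := by
  by_cases hne : a = []
  · subst hne
    have h1 : nu = [] := by
      cases nu with
      | nil => rfl
      | cons x xs =>
        have h1 := hd.1
        have h3 := hnu.2 x (by simp)
        simp at h1
        omega
    subst h1
    refine ⟨[], ⟨rfl, ?_, ?_⟩, ?_, ?_⟩
    · intro i j hi; simp at hi
    · intro i hi; simp at hi
    · intro k j; simp
    · constructor <;> simp
  have hl : 0 < a.length := List.length_pos_iff.2 hne
  have hA := adm_of ha h2 hp hnu.1 hd hne hk
  have h0 : 0 < nu.getD 0 0 := by
    have h1 := hA.dom 1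
    have h3 := hA.two 0 (by omega)
    rw [SS_succ, SS_succ, SS_zero, SS_zero] at h1
    omega
  obtain ⟨t, ht, ht'⟩ := first_descent (nu := fun i => nu.getD i 0)
    (M := a.length - 1 + 1) hA.nuanti h0 (hA.nuzero _ le_rfl)
  obtain ⟨r, hy, hc, hc0, hlen, ⟨hrow, hov⟩, -⟩ := build _ _ _ _ _ hA t ht ht'
  obtain ⟨w, wy, wc, wc0, wl, wd⟩ := evac (L := a.length - 1 + 1) (nu := fun i => nu.getD i 0)
    hA.nuzero r.reverse hy (fun j => by rw [List.count_reverse, hc]) (by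
      rw [List.count_reverse, hc0])
  rw [List.length_reverse, hlen] at wl wd
  rw [List.reverse_reverse] at wd
  refine ⟨w, ⟨wl, ?_, ?_⟩, wy, ⟨wc, wc0⟩⟩
  · intro i j hi hj
    unfold rowOffset
    rw [take_sum_eq]
    have h1 := hA.al_sum_le (i + 1)
    rw [SS_succ] at h1
    have h3 := wd (SS (fun i => a.getD i 0) i + j) (by omega)
    have h4 := hrow i j (by omega) hj
    by_contra hcon
    have := h3.1 (by omega)
    omega
  · intro i hi ho
    unfold rowOffset
    rw [take_sum_eq]
    have hP : p.getD i 0 = p.getD (i + 1) 0 + 1 := by simpa [ovOf] using ho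
    have h1 := hA.tail i
    have h3 := hA.two i (by omega)
    have h4 := SS_succ (fun i => a.getD i 0) i
    have h5 := hov i (by omega) hP
    have h6 := wd (SS (fun i => a.getD i 0) (i + 1) - 1) (by omega)
    rw [show SS (fun i => a.getD i 0) (i + 1) - 1 + 1 = SS (fun i => a.getD i 0) (i + 1) by
      omega] at h6
    exact h6.2 h5

theorem count_drop_step (w : List ℕ) (c m : ℕ) (h : m < w.length) :
    (w.drop m).count c = (w.drop (m + 1)).count c + if w.getD m 0 = c then 1 else 0 := by
  rw [List.drop_eq_getElem_cons h, List.count_cons, List.getD_eq_getElem _ _ h]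
  simp

theorem count_drop_le (w : List ℕ) (c m k : ℕ) :
    (w.drop m).count c ≤ (w.drop (m + k)).count c + k := by
  induction k with
  | zero => simp
  | succ k ih =>
    by_cases h : m + k < w.length
    · have := count_drop_step w c (m + k) h
      rw [show m + (k + 1) = m + k + 1 by omega]
      split_ifs at this <;> omega
    · have : w.drop (m + k) = [] := List.drop_eq_nil_of_le (by omega)
      rw [this] at ih
      simp at ih
      omega

theorem count_block (w : List ℕ) (c m k : ℕ) (hk : 2 ≤ k) (h : m + k ≤ w.length) :
    (w.drop m).count c + (if w.getD m 0 = c then 0 else 1) +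
      (if w.getD (m + k - 1) 0 = c then 0 else 1) ≤ (w.drop (m + k)).count c + k := by
  have h1 := count_drop_step w c m (by omega)
  have h3 := count_drop_step w c (m + k - 1) (by omega)
  have h4 := count_drop_le w c (m + 1) (k - 2)
  rw [show m + 1 + (k - 2) = m + k - 1 by omega] at h4
  rw [show m + k - 1 + 1 = m + k by omega] at h3
  split_ifs at * <;> omega

section Nec

variable {a p nu w : List ℕ}

theorem letters_le (h2 : PartsGE a 2) (hw : IsRibbonWord a (ovOf p) w) (hy : IsYam w)
    (i : ℕ) (hi : i ≤ a.length) :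
    ∀ k, k < SS (fun i => a.getD i 0) i → w.getD k 0 ≤ i := by
  induction i with
  | zero => intro k hk; rw [SS_zero] at hk; omega
  | succ i ih =>
    have ih := ih (by omega)
    have hlen : SS (fun i => a.getD i 0) (i + 1) ≤ w.length := by
      rw [hw.1, ← SS_ge_length a le_rfl]
      exact SS_mono _ hi
    have h2i := partsGE_getD h2 (show i < a.length by omega)
    rw [SS_succ] at hlen
    set s := SS (fun i => a.getD i 0) i with hs
    have hfirst : w.getD s 0 ≤ i + 1 := by
      by_contra hc
      have hsl : s < w.length := by omega
      have hy1 := hy (s + 1) (w.getD s 0 - 2)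
      rw [show w.getD s 0 - 2 + 2 = w.getD s 0 by omega,
        show w.getD s 0 - 2 + 1 = w.getD s 0 - 1 by omega] at hy1
      have hpos : 0 < (w.take (s + 1)).count (w.getD s 0) := by
        rw [List.count_pos_iff, List.getD_eq_getElem _ _ hsl,
          List.mem_take_iff_getElem]
        exact ⟨s, by omega, rfl⟩
      have hpos2 : w.getD s 0 - 1 ∈ w.take (s + 1) := by
        rw [← List.count_pos_iff]; omega
      obtain ⟨j, hj, hje⟩ := mem_take_getD hpos2
      by_cases hjs : j = s
      · subst hjs; omega
      · have := ih j (by omega)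
        omega
    have hblk : ∀ j, j < a.getD i 0 → w.getD (s + j) 0 ≤ i + 1 := by
      intro j
      induction j with
      | zero => intro _; exact hfirst
      | succ j ihj =>
        intro hj
        have h1 := hw.2.1 i j (by omega) hj
        unfold rowOffset at h1
        rw [take_sum_eq, ← hs] at h1
        have := ihj (by omega)
        rw [← Nat.add_assoc]
        omega
    intro k hk
    rw [SS_succ, ← hs] at hk
    by_cases hks : k < s
    · have := ih k hks; omega
    · have := hblk (k - s) (by omega)
      rw [show s + (k - s) = k by omega] at this
      exact this

theorem mem_take_le (h2 : PartsGE a 2) (hw : IsRibbonWord a (ovOf p) w) (hy : IsYam w)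
    (i : ℕ) (hi : i ≤ a.length) (x : ℕ) (hx : x ∈ w.take (SS (fun i => a.getD i 0) i)) :
    x ≤ i := by
  obtain ⟨k, hk, hke⟩ := mem_take_getD hx
  rw [← hke]
  exact letters_le h2 hw hy i hi k hk

theorem nec_dom (h2 : PartsGE a 2) (h : InSupport a p nu) : DomLE a nu := by
  obtain ⟨w, hw, hy, hc, hc0⟩ := h
  have hsum : nu.sum = a.sum := by
    rw [← SS_ge_length nu le_rfl, ← hw.1, length_eq_sum_count w nu.length hc0 ?_]
    · unfold SS
      exact Finset.sum_congr rfl fun j _ => (hc j).symm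
    · intro j hj
      rw [hc, List.getD_eq_default _ _ hj]
  refine ⟨hsum.symm, ?_⟩
  have main : ∀ m, m ≤ a.length →
      SS (fun i => a.getD i 0) m ≤ SS (fun i => nu.getD i 0) m := by
    intro m hm
    have h1 := length_eq_sum_count (w.take (SS (fun i => a.getD i 0) m)) m (by
      rw [List.count_eq_zero]
      intro hmem
      exact List.count_eq_zero.1 hc0 (List.mem_of_mem_take hmem))
      (fun j hj => by
        rw [List.count_eq_zero]
        intro hmem
        have := mem_take_le h2 hw hy m hm _ hmem
        omega)
    rw [List.length_take, min_eq_left] at h1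
    · rw [h1]
      unfold SS
      refine Finset.sum_le_sum fun j _ => ?_
      rw [← hc j]
      exact (List.take_sublist _ _).count_le _
    · rw [hw.1, ← SS_ge_length a le_rfl]
      exact SS_mono _ hm
  intro m
  rw [take_sum_eq, take_sum_eq]
  by_cases hm : m ≤ a.length
  · exact main m hm
  · have h1 := main a.length le_rfl
    have h3 := SS_mono (fun i => nu.getD i 0) (show a.length ≤ m by omega)
    rw [SS_ge_length a le_rfl] at h1
    rw [SS_ge_length a (by omega)]
    omega

theorem nec_key (h2 : PartsGE a 2) (hp : IsOverlapSeq a p) (h : InSupport a p nu) (i : ℕ) :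
    nu.getD i 0 + p.getD i 0 + SS (fun i => a.getD i 0) i ≤ a.sum := by
  obtain ⟨w, hw, hy, hc, hc0⟩ := h
  have hle : ∀ m, m ≤ a.length → SS (fun i => a.getD i 0) m ≤ w.length := fun m hm => by
    rw [hw.1, ← SS_ge_length a le_rfl]
    exact SS_mono _ hm
  have hsplit : ∀ j, j ≤ a.length → ∀ c, j < c →
      w.count c = (w.drop (SS (fun i => a.getD i 0) j)).count c := by
    intro j hj c hjc
    conv_lhs => rw [← List.take_append_drop (SS (fun i => a.getD i 0) j) w]
    rw [List.count_append, List.count_eq_zero.2, Nat.zero_add]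
    intro hmem
    have := mem_take_le h2 hw hy j hj c hmem
    omega
  by_cases hi : i < a.length
  swap
  · have h1 := hsplit a.length le_rfl (i + 1) (by omega)
    rw [SS_ge_length a le_rfl, ← hw.1, List.drop_length, hc] at h1
    rw [ov_zero hp (by omega), SS_ge_length a (by omega), h1]
    simp
  have hsuf : ∀ d q, q + d + 1 = a.length →
      (w.drop (SS (fun i => a.getD i 0) q)).count (i + 1) + p.getD q 0 +
        (if w.getD (SS (fun i => a.getD i 0) q) 0 = i + 1 then 0 else 1) +
        SS (fun i => a.getD i 0) q ≤ a.sum := by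
    intro d
    induction d with
    | zero =>
      intro q hq
      have h2q := partsGE_getD h2 (show q < a.length by omega)
      have h1 := hle (q + 1) (by omega)
      rw [SS_succ] at h1
      have h3 := count_block w (i + 1) (SS (fun i => a.getD i 0) q) (a.getD q 0) h2q h1
      have h4 : w.drop (SS (fun i => a.getD i 0) q + a.getD q 0) = [] := by
        apply List.drop_eq_nil_of_le
        rw [← SS_succ (fun i => a.getD i 0), SS_ge_length a (by omega), hw.1]
      rw [h4] at h3
      rw [ov_zero hp (by omega), ← hw.1]
      simp only [List.count_nil] at h3
      omega
    | succ d ih =>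
      intro q hq
      have h2q := partsGE_getD h2 (show q < a.length by omega)
      have h1 := hle (q + 1) (by omega)
      have ihq := ih (q + 1) (by omega)
      have hov := hw.2.2 q (by omega)
      have hst := ov_step hp q
      unfold rowOffset at hov
      rw [take_sum_eq] at hov
      have hov' : p.getD q 0 = p.getD (q + 1) 0 + 1 → _ := fun hx => hov (by simpa [ovOf] using hx)
      rw [SS_succ] at h1 ihq hov'
      have h3 := count_block w (i + 1) (SS (fun i => a.getD i 0) q) (a.getD q 0) h2q h1
      split_ifs at * <;> omega
  have h1 := hsuf (a.length - 1 - i) i (by omega)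
  rw [← hsplit i hi.le (i + 1) (by omega), hc] at h1
  omega

end Nec



theorem lt_countP_iff (p : List ℕ) (h : ∀ i, p.getD (i + 1) 0 ≤ p.getD i 0) (i : ℕ) :
    i < lenp p ↔ 0 < p.getD i 0 := by
  unfold lenp
  induction p generalizing i with
  | nil => simp
  | cons x xs ih =>
    have hxs : ∀ i, xs.getD (i + 1) 0 ≤ xs.getD i 0 := fun i => by
      have := h (i + 1)
      simpa using this
    rw [List.countP_cons]
    by_cases hx : x = 0
    · have hz : ∀ j, xs.getD j 0 = 0 := by
        intro j
        have := anti_of_step (f := fun i => (x :: xs).getD i 0) h (Nat.zero_le (j + 1))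
        simp only [List.getD_cons_succ, List.getD_cons_zero] at this
        omega
      have h0 := (ih hxs 0).not.2 (by rw [hz]; omega)
      rcases i with _ | i
      · simp [hx]; simpa using h0
      · simp only [List.getD_cons_succ, hz]
        rw [if_neg (by simp [hx])]
        omega
    · rcases i with _ | i
      · simp [hx]; omega
      · simp only [List.getD_cons_succ]
        rw [← ih hxs i]
        simp [hx]

section Final

variable {a p nu : List ℕ}

theorem P_le_list (hp : IsOverlapSeq a p) (d i : ℕ) (h : i + d + 1 = a.length) :
    p.getD i 0 ≤ d := by
  induction d generalizing i with
  | zero => rw [ov_zero hp (by omega)]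
  | succ d ih =>
    have := ih (i + 1) (by omega)
    have := ov_step hp i
    omega

theorem P_le_len (hp : IsOverlapSeq a p) (i : ℕ) : p.getD i 0 ≤ a.length - 1 - i := by
  by_cases h : i < a.length
  · exact P_le_list hp _ _ (by omega)
  · rw [ov_zero hp (by omega)]; omega

theorem P_head_le (hp : IsOverlapSeq a p) (i : ℕ) : p.getD 0 0 ≤ p.getD i 0 + i := by
  induction i with
  | zero => omega
  | succ i ih =>
    have := ov_step hp i
    omega

theorem tail_list (h2 : PartsGE a 2) (m : ℕ) :
    SS (fun i => a.getD i 0) m + 2 * (a.length - m) ≤ a.sum := by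
  by_cases hm : a.length ≤ m
  · rw [SS_ge_length a hm]; omega
  · induction hk : a.length - m generalizing m with
    | zero => omega
    | succ k ih =>
      have h1 := partsGE_getD h2 (show m < a.length by omega)
      have h3 := SS_succ (fun i => a.getD i 0) m
      by_cases hm' : a.length ≤ m + 1
      · rw [SS_ge_length a hm'] at h3
        omega
      · have := ih (m + 1) hm' (by omega)
        omega

theorem P0_le_sum (h2 : PartsGE a 2) (hp : IsOverlapSeq a p) (i : ℕ) :
    p.getD i 0 + SS (fun i => a.getD i 0) i ≤ a.sum := by
  have h1 := P_le_len hp i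
  have h3 := tail_list h2 i
  omega

theorem interval_of (h2 : PartsGE a 2) (hp : IsOverlapSeq a p) (hd : DomLE a nu)
    (h0 : nu.getD 0 0 + p.getD 0 0 ≤ a.sum) : InInterval a p nu := by
  have hP := P0_le_sum h2 hp 0
  refine ⟨hd, ?_, ?_⟩
  · rw [← hd.1]; simp [-List.getD_eq_getElem?_getD]; omega
  · intro k
    rcases k with _ | _ | k
    · simp
    · rw [take_sum_eq, SS_succ, SS_zero]
      simp [-List.getD_eq_getElem?_getD]; omega
    · have h1 : (nu.take (k + 1 + 1)).sum ≤ nu.sum := by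
        rw [← List.sum_take_add_sum_drop nu (k + 1 + 1)]; omega
      rw [← hd.1] at h1
      simp [-List.getD_eq_getElem?_getD]
      omega

theorem rho_eq (h2 : PartsGE a 2) (hp : IsOverlapSeq a p) (i : ℕ) :
    rho a p i + p.getD i 0 + SS (fun i => a.getD i 0) i = a.sum + 1 := by
  have h1 := P0_le_sum h2 hp i
  have h3 := List.sum_take_add_sum_drop a i
  rw [take_sum_eq] at h3
  unfold rho
  omega

theorem witSize_eq (i : ℕ) :
    witSize a p i = SS (fun j => rho a p i - a.getD j 0) i := by
  have gen : ∀ (f : ℕ → ℕ) (m : ℕ), ∑ j ∈ Finset.Icc 1 m, f j = SS (fun j => f (j + 1)) m := by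
    intro f m
    induction m with
    | zero => simp [SS]
    | succ m ih => rw [Finset.sum_Icc_succ_top (by omega), SS_succ, ih]
  unfold witSize
  rw [gen]
  rfl

/-- The witness sequence. -/
def fM (a p : List ℕ) (i k : ℕ) : ℕ :=
  if k < i then max (a.getD k 0) (rho a p i) else if k = i then rho a p i
  else if k = i + 1 then p.getD i 0 - 1 - witSize a p i else 0

theorem core_facts (h2 : PartsGE a 2) (hp : IsOverlapSeq a p) {i : ℕ}
    (hP : 0 < p.getD i 0) :
    i + 1 < a.length ∧ a.getD i 0 ≤ rho a p i ∧ p.getD i 0 ≤ rho a p i := by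
  have hlen : i + 1 < a.length := by
    by_contra hc
    rw [ov_zero hp (by omega)] at hP
    omega
  have h1 := rho_eq h2 hp i
  have h3 := P_le_len hp i
  have h4 := tail_list h2 (i + 1)
  rw [SS_succ] at h4
  have h5 := partsGE_getD h2 (show i < a.length by omega)
  refine ⟨hlen, ?_, ?_⟩ <;> omega

theorem core (ha : IsPartition a) (h2 : PartsGE a 2) (hp : IsOverlapSeq a p) {i : ℕ} (hi : 1 ≤ i)
    (hw : witSize a p i < p.getD i 0) {mu : List ℕ} (hmu : ∀ k, mu.getD k 0 = fM a p i k) :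
    mu.sum = a.sum ∧ InInterval a p mu ∧ ¬ InSupport a p mu := by
  obtain ⟨hlen, hr1, hr2⟩ := core_facts h2 hp (i := i) (by omega)
  have hrho := rho_eq h2 hp i
  have hwit := witSize_eq (a := a) (p := p) i
  have hf : (fun k => mu.getD k 0) = fM a p i := funext hmu
  have s1 : ∀ m, m ≤ i → SS (fM a p i) m =
      SS (fun j => a.getD j 0) m + SS (fun j => rho a p i - a.getD j 0) m := by
    intro m
    induction m with
    | zero => intro _; simp [SS]
    | succ m ih =>
      intro hm
      rw [SS_succ, SS_succ, SS_succ, ih (by omega)]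
      have : fM a p i m = max (a.getD m 0) (rho a p i) := by
        unfold fM; rw [if_pos (by omega)]
      rw [this]; omega
  have s2 : SS (fM a p i) (i + 1) =
      SS (fun j => a.getD j 0) i + witSize a p i + rho a p i := by
    rw [SS_succ, s1 i le_rfl, hwit]
    simp [fM]
  have s3 : ∀ m, i + 2 ≤ m → SS (fM a p i) m = a.sum := by
    intro m hm
    rw [SS_const (m := i + 2) hm, SS_succ, s2]
    · have : fM a p i (i + 1) = p.getD i 0 - 1 - witSize a p i := by
        simp [fM]
      rw [this]; omega
    · intro j hj
      unfold fM
      rw [if_neg (by omega), if_neg (by omega), if_neg (by omega)]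
  have hsum : mu.sum = a.sum := by
    rw [← SS_ge_length mu (le_max_left mu.length (i + 2)), hf, s3 _ (le_max_right _ _)]
  have hdom : DomLE a mu := by
    refine ⟨hsum.symm, fun m => ?_⟩
    rw [take_sum_eq, take_sum_eq, hf]
    rcases lt_or_ge m (i + 1) with h | h
    · rw [s1 m (by omega)]; omega
    · rcases eq_or_lt_of_le h with h | h
      · rw [← h, s2, SS_succ]; omega
      · rw [s3 m (by omega)]
        have := tail_list h2 m
        omega
  have h0 : mu.getD 0 0 = max (a.getD 0 0) (rho a p i) := by
    rw [hmu]; unfold fM; rw [if_pos (by omega)]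
  refine ⟨hsum, interval_of h2 hp hdom ?_, fun hs => ?_⟩
  · rw [h0]
    have h3 := P_le_len hp 0
    have h4 := tail_list h2 1
    rw [SS_succ, SS_zero] at h4
    have h5 := P_head_le hp i
    have h6 : i * 2 ≤ SS (fun j => a.getD j 0) i :=
      SS_ge_mul (fun j hj => partsGE_getD h2 (by omega))
    omega
  · have := nec_key h2 hp hs i
    have e : mu.getD i 0 = rho a p i := by rw [hmu]; simp [fM]
    omega

theorem map_getD (i : ℕ) (f : ℕ → ℕ) (l : List ℕ) (k : ℕ) :
    (((List.range i).map f) ++ l).getD k 0 = if k < i then f k else l.getD (k - i) 0 := by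
  split_ifs with h
  · rw [List.getD_append _ _ _ _ (by simpa using h), List.getD_eq_getElem _ _ (by simpa using h)]
    simp
  · rw [List.getD_append_right _ _ _ _ (by simp; omega)]
    simp

theorem pairwise_of_getD {l : List ℕ} (h : ∀ k, l.getD (k + 1) 0 ≤ l.getD k 0) :
    l.Pairwise (· ≥ ·) := by
  rw [List.pairwise_iff_getElem]
  intro i j hi hj hij
  have := anti_of_step (f := fun k => l.getD k 0) h hij.le
  simp only [List.getD_eq_getElem _ _ hi, List.getD_eq_getElem _ _ hj] at this
  exact this

theorem fM_anti (ha : IsPartition a) (h2 : PartsGE a 2) (hp : IsOverlapSeq a p) {i : ℕ}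
    (hw : witSize a p i < p.getD i 0) (k : ℕ) : fM a p i (k + 1) ≤ fM a p i k := by
  obtain ⟨hlen, hr1, hr2⟩ := core_facts h2 hp (i := i) (by omega)
  have := getD_anti ha.1 k
  unfold fM
  split_ifs <;> omega

theorem fwd (ha : IsPartition a) (h2 : PartsGE a 2) (hp : IsOverlapSeq a p)
    (hnu : IsPartition nu) (hIv : InInterval a p nu) (hns : ¬ InSupport a p nu) :
    ∃ i, 1 ≤ i ∧ 0 < p.getD i 0 ∧ witSize a p i < p.getD i 0 := by
  have hex : ∃ i, a.sum < nu.getD i 0 + p.getD i 0 + SS (fun i => a.getD i 0) i := by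
    by_contra hc
    push Not at hc
    exact hns (suff ha h2 hp hnu hIv.1 hc)
  obtain ⟨i, hi⟩ := hex
  have hd : ∀ m, SS (fun i => a.getD i 0) m ≤ SS (fun i => nu.getD i 0) m := fun m => by
    rw [← take_sum_eq, ← take_sum_eq]; exact hIv.1.2 m
  have hle : ∀ m, SS (fun i => nu.getD i 0) m ≤ a.sum := fun m => by
    rw [hIv.1.1, ← take_sum_eq, ← List.sum_take_add_sum_drop nu m]; omega
  have hPs := P0_le_sum h2 hp 0
  have hi1 : 1 ≤ i := by
    by_contra hc
    have h0 : i = 0 := by omega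
    subst h0
    have h1 := hIv.2.2 1
    rw [take_sum_eq, SS_succ, SS_zero] at h1
    simp only [List.take_succ_cons, List.take_zero, List.sum_cons, List.sum_nil] at h1
    rw [SS_zero] at hi hPs
    omega
  have h3 := hle (i + 1)
  have h4 := hd i
  rw [SS_succ] at h3
  have hrho := rho_eq h2 hp i
  have hP : 0 < p.getD i 0 := by omega
  refine ⟨i, hi1, hP, ?_⟩
  rw [witSize_eq]
  have hnr : rho a p i ≤ nu.getD i 0 := by omega
  have main : ∀ m, m ≤ i →
      SS (fun j => a.getD j 0) m + SS (fun j => rho a p i - a.getD j 0) m ≤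
        SS (fun i => nu.getD i 0) m := by
    intro m
    induction m with
    | zero => intro _; simp [SS]
    | succ m ih =>
      intro hm
      by_cases hc : rho a p i ≤ a.getD m 0
      · have : SS (fun j => rho a p i - a.getD j 0) (m + 1) = 0 := by
          rw [SS_eq_mul (c := 0)]
          · simp
          · intro j hj
            have := anti_of_step (f := fun i => a.getD i 0) (getD_anti ha.1)
              (show j ≤ m by omega)
            omega
        rw [this]
        exact hd (m + 1)
      · have h5 := ih (by omega)
        have h6 := anti_of_step (f := fun i => nu.getD i 0) (getD_anti hnu.1)
          (show m ≤ i by omega)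
        rw [SS_succ, SS_succ, SS_succ]
        omega
  have := main i le_rfl
  omega

end Final

theorem main_thm
    (a p : List ℕ) (ha : IsPartition a) (h2 : PartsGE a 2) (hp : IsOverlapSeq a p) :
    (SupportSet a p ⊂ IntervalSet a p ↔
      (2 ≤ lenp p ∧ ∃ i, 1 ≤ i ∧ i + 1 ≤ lenp p ∧ witSize a p i < p.getD i 0)) ∧
    (∀ i, 1 ≤ i → i + 1 ≤ lenp p → witSize a p i < p.getD i 0 →
      (∀ j, 1 ≤ j → j ≤ i →
        rho a p i ≤ a.getD (j - 1) 0 + wit a p i j ∧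
          p.getD i 0 - 1 - witSize a p i ≤ rho a p i) ∧
      (∀ mu : List ℕ,
        mu.Perm (((List.range i).map fun j => a.getD j 0 + wit a p i (j + 1)) ++
            [rho a p i, p.getD i 0 - 1 - witSize a p i]) →
        mu.Pairwise (· ≥ ·) →
        mu.sum = a.sum ∧ InInterval a p mu ∧ ¬ InSupport a p mu)) := by
  have hpanti : ∀ i, p.getD (i + 1) 0 ≤ p.getD i 0 := fun i => by
    have := ov_step hp i; omega
  have hmx : ∀ i j, a.getD j 0 + wit a p i (j + 1) = max (a.getD j 0) (rho a p i) := by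
    intro i j
    unfold wit
    rw [Nat.add_sub_cancel]
    omega
  have hget : ∀ i k, (((List.range i).map fun j => a.getD j 0 + wit a p i (j + 1)) ++
            [rho a p i, p.getD i 0 - 1 - witSize a p i]).getD k 0 = fM a p i k := by
    intro i k
    rw [map_getD]
    unfold fM
    split_ifs with h1 h3 h4
    · exact hmx i k
    · rw [h3, Nat.sub_self]; rfl
    · rw [h4, Nat.add_sub_cancel_left]; rfl
    · exact List.getD_eq_default _ _ (by simp; omega)
  refine ⟨⟨?_, ?_⟩, ?_⟩
  · intro hss
    obtain ⟨nu, hnu, hns⟩ := Set.exists_of_ssubset hss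
    obtain ⟨i, h1, hP, hw⟩ := fwd ha h2 hp hnu.1 hnu.2 (fun h => hns ⟨hnu.1, h⟩)
    have := (lt_countP_iff p hpanti i).2 hP
    exact ⟨by omega, i, h1, by omega, hw⟩
  · rintro ⟨-, i, h1, hl, hw⟩
    refine ⟨fun nu hnu => ⟨hnu.1, ?_⟩, fun hsub => ?_⟩
    · refine interval_of h2 hp (nec_dom h2 hnu.2) ?_
      have := nec_key h2 hp hnu.2 0
      rw [SS_zero] at this
      exact this
    · obtain ⟨hlen, hr1, hr2⟩ := core_facts h2 hp (i := i) (by omega)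
      set M : List ℕ := ((List.range i).map fun j => a.getD j 0 + wit a p i (j + 1)) ++
        (if p.getD i 0 - 1 - witSize a p i = 0 then [rho a p i] else
            [rho a p i, p.getD i 0 - 1 - witSize a p i]) with hM
      have hg : ∀ k, M.getD k 0 = fM a p i k := by
        intro k
        rw [← hget, hM, map_getD, map_getD]
        split_ifs with hk hz
        · rfl
        · rw [hz]
          rcases hki : k - i with _ | _ | q
          · rfl
          · rfl
          · rfl
        · rfl
      have hpart : IsPartition M := by
        refine ⟨pairwise_of_getD fun k => ?_, ?_⟩
        · rw [hg, hg]; exact fM_anti ha h2 hp hw k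
        · intro x hx
          rw [hM, List.mem_append, List.mem_map] at hx
          rcases hx with ⟨j, -, rfl⟩ | hx
          · rw [hmx]; omega
          · split_ifs at hx with hz
            · simp [-List.getD_eq_getElem?_getD] at hx; omega
            · simp [-List.getD_eq_getElem?_getD] at hx; omega
      obtain ⟨-, c2, c3⟩ := core ha h2 hp h1 hw hg
      exact c3 (hsub ⟨hpart, c2⟩).2
  · intro i h1 hl hw
    obtain ⟨hlen, hr1, hr2⟩ := core_facts h2 hp (i := i) (by omega)
    refine ⟨fun j hj hji => ⟨?_, by omega⟩, fun mu hperm hs => ?_⟩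
    · unfold wit; omega
    · have hpw : (((List.range i).map fun j => a.getD j 0 + wit a p i (j + 1)) ++
            [rho a p i, p.getD i 0 - 1 - witSize a p i]).Pairwise (· ≥ ·) :=
        pairwise_of_getD fun k => by
          rw [hget, hget]; exact fM_anti ha h2 hp hw k
      have heq := dec_unique hs hpw (fun k => hperm.count_eq k)
      refine core ha h2 hp h1 hw fun k => ?_
      rw [heq]; exact hget i k


/-- Theorem `Tchar`: the Schur support of `R_a^p` is a proper subset of the
Schur interval iff `ℓ(p) ≥ 2` and for some `1 ≤ i ≤ ℓ(p)−1` the `i`-witness vector fits its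
slack, `Σ_{j=1}^i [ϱ_i − a_j]₊ ≤ p_{i+1} − 1`; and in that case
`a_j + g̃ʲ ≥ ϱ_i ≥ p_{i+1}−1−|g̃|` for `j = 1, …, i` and the weakly decreasing rearrangement of
`(a₁+g̃₁, …, a_i+g̃_i, ϱ_i, p_{i+1}−1−|g̃|)` is a partition of `|a|` in the Schur interval
but not in the support. -/
theorem proper_support_iff_witness_fits_slack
    (a p : List ℕ) (ha : IsPartition a) (h2 : PartsGE a 2) (hp : IsOverlapSeq a p) :
    (SupportSet a p ⊂ IntervalSet a p ↔
      (2 ≤ lenp p ∧ ∃ i, 1 ≤ i ∧ i + 1 ≤ lenp p ∧ witSize a p i < p.getD i 0)) ∧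
    (∀ i, 1 ≤ i → i + 1 ≤ lenp p → witSize a p i < p.getD i 0 →
      (∀ j, 1 ≤ j → j ≤ i →
        rho a p i ≤ a.getD (j - 1) 0 + wit a p i j ∧
          p.getD i 0 - 1 - witSize a p i ≤ rho a p i) ∧
      (∀ mu : List ℕ,
        mu.Perm (((List.range i).map fun j => a.getD j 0 + wit a p i (j + 1)) ++
            [rho a p i, p.getD i 0 - 1 - witSize a p i]) →
        mu.Pairwise (· ≥ ·) →
        mu.sum = a.sum ∧ InInterval a p mu ∧ ¬ InSupport a p mu)) := by
  exact main_thm a p ha h2 hp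

end RibbonSupport
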